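/- There are exactly 3228 conjugacy classes of finite-index subgroups Γ̄ of PSL(2,ℤ) that have genus zero and satisfy n + 3·e₂(Γ̄) + 2·e₃(Γ̄) ≤ 24, where n is the index of Γ̄ (for such genus-zero subgroups this quantity necessarily lies in {6, 12, 18, 24}). These are exactly the conjugacy classes of subgroups of PSL(2,ℤ) occurring as modular monodromy groups of elliptically fibered K3 surfaces. -/

import Mathlib

open Matrix

/-- `SL(2,ℤ)`: the group of 2×2 integer matrices of determinant 1. -/
abbrev SL2Z := Matrix.SpecialLinearGroup (Fin 2) ℤ

instance : Fact (Even (Fintype.card (Fin 2))) := ⟨by simp⟩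

/-- The subgroup `{±I}` of `SL(2,ℤ)`. -/
def pmOne : Subgroup SL2Z := Subgroup.zpowers (-1 : SL2Z)

instance : pmOne.Normal := by
  constructor
  intro x hx g
  obtain ⟨n, rfl⟩ := hx
  have h : Commute ((-1 : SL2Z) ^ n) g := (Commute.neg_one_left g).zpow_left n
  refine ⟨n, ?_⟩
  rw [← h.eq, mul_assoc, mul_inv_cancel, mul_one]

/-- `PSL(2,ℤ)`, the modular group, as the quotient of `SL(2,ℤ)` by `{±I}`. -/
abbrev PSL2Z := SL2Z ⧸ pmOne

/-- The natural projection `ξ : SL(2,ℤ) → PSL(2,ℤ)`. -/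
def xi : SL2Z →* PSL2Z := QuotientGroup.mk' pmOne

/-- The element `S` of `PSL(2,ℤ)`, the image of `[[0,-1],[1,0]]`. -/
def Sp : PSL2Z := xi ⟨!![0, -1; 1, 0], by norm_num [Matrix.det_fin_two_of]⟩

/-- The element `T` of `PSL(2,ℤ)`, the image of `[[1,1],[0,1]]`. -/
def Tp : PSL2Z := xi ⟨!![1, 1; 0, 1], by norm_num [Matrix.det_fin_two_of]⟩

/-- The number of left cosets in `PSL(2,ℤ)/Γ` fixed by `g` (for the
left-multiplication action).  For `g = S` this is `e₂(Γ)`, for `g = S*T` it is `e₃(Γ)`. -/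
noncomputable def nFix (g : PSL2Z) (Γ : Subgroup PSL2Z) : ℕ :=
  Nat.card {x : PSL2Z ⧸ Γ // g • x = x}

/-- The number of orbits of the cyclic subgroup generated by `g` on `PSL(2,ℤ)/Γ`.
For `g = S, S*T, T` these are `c₂(Γ), c₃(Γ), h(Γ)` respectively. -/
noncomputable def nOrb (g : PSL2Z) (Γ : Subgroup PSL2Z) : ℕ :=
  Nat.card (MulAction.orbitRel.Quotient (Subgroup.zpowers g) (PSL2Z ⧸ Γ))

/-- `Γ` has genus zero: `c₂(Γ) + c₃(Γ) + h(Γ) = index(Γ) + 2`. -/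
def GenusZero (Γ : Subgroup PSL2Z) : Prop :=
  nOrb Sp Γ + nOrb (Sp * Tp) Γ + nOrb Tp Γ = Γ.index + 2

/-- `Γ` is torsion free: it contains no nontrivial element of finite order. -/
def TorsionFree (Γ : Subgroup PSL2Z) : Prop :=
  ∀ x ∈ Γ, x ≠ 1 → ¬ IsOfFinOrder x

/-- Two subgroups of a group are conjugate. -/
def SubgroupConj {G : Type*} [Group G] (H K : Subgroup G) : Prop :=
  ∃ g : G, Subgroup.map (MulAut.conj g).toMonoidHom H = K

/-- The number of conjugacy classes of subgroups of `PSL(2,ℤ)` satisfying `P`. -/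
noncomputable def countClasses (P : Subgroup PSL2Z → Prop) : ℕ :=
  Nat.card (Quot fun A B : {Γ : Subgroup PSL2Z // P Γ} => SubgroupConj A.1 B.1)

/-- The index of the torsion free subgroup `Γ^tf` associated to `Γ`:
`index(Γ) + 3·e₂(Γ) + 2·e₃(Γ)`. -/
noncomputable def tfIdx (Γ : Subgroup PSL2Z) : ℕ :=
  Γ.index + 3 * nFix Sp Γ + 2 * nFix (Sp * Tp) Γ

namespace K3MM

/-! ### Euler characteristic bookkeeping -/

/-- number of classes of a setoid -/
noncomputable def nq {D : Type} (s : Setoid D) : ℕ := Nat.card (Quotient s)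

theorem nq_anti {D : Type} [Finite D] {s t : Setoid D} (h : s ≤ t) : nq t ≤ nq s := by
  refine Nat.card_le_card_of_surjective (Quotient.map id (fun a b hab => h hab)) ?_
  intro q
  induction q using Quotient.inductionOn with
  | h x => exact ⟨Quotient.mk s x, rfl⟩

theorem nq_lt {D : Type} [Finite D] {s t : Setoid D} (h : s ≤ t) {a b : D} (hab : t a b)
    (hn : ¬ s a b) : nq t + 1 ≤ nq s := by
  have hs : Function.Surjective (Quotient.map (sa := s) (sb := t) id (fun a b hab => h hab)) := by
    intro q
    induction q using Quotient.inductionOn with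
    | h x => exact ⟨Quotient.mk s x, rfl⟩
  have := Fintype.ofFinite (Quotient s)
  have := Fintype.ofFinite (Quotient t)
  unfold nq
  rw [Nat.card_eq_fintype_card, Nat.card_eq_fintype_card]
  refine Fintype.card_lt_of_surjective_not_injective _ hs ?_
  intro hi
  apply hn
  have : Quotient.mk s a = Quotient.mk s b := hi (Quotient.sound hab)
  exact Quotient.exact this

open Classical in
/-- identify the classes of `a` and `b` -/
noncomputable def mergeS {D : Type} (s : Setoid D) (a b : D) : Setoid D :=
  Setoid.ker (fun x => if Quotient.mk s x = Quotient.mk s b then Quotient.mk s a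
    else Quotient.mk s x)

theorem le_mergeS {D : Type} (s : Setoid D) (a b : D) : s ≤ mergeS s a b := by
  intro x y h
  have : Quotient.mk s x = Quotient.mk s y := Quotient.sound h
  classical
  change (if _ then _ else _) = (if _ then _ else _)
  rw [this]

theorem mergeS_rel {D : Type} (s : Setoid D) (a b : D) : mergeS s a b a b := by
  classical
  change (if _ then _ else _) = (if _ then _ else _)
  rw [if_pos rfl]
  split <;> rfl

theorem nq_mergeS {D : Type} [Finite D] (s : Setoid D) (a b : D) :
    nq s ≤ nq (mergeS s a b) + 1 := by
  classical
  let g : Option (Quotient (mergeS s a b)) → Quotient s := fun o => match o with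
    | none => Quotient.mk s b
    | some q => Quotient.lift (s := mergeS s a b)
        (fun x => if Quotient.mk s x = Quotient.mk s b then Quotient.mk s a
          else Quotient.mk s x) (fun x y h => h) q
  have hg : Function.Surjective g := by
    intro q
    induction q using Quotient.inductionOn with
    | h x =>
      by_cases hx : Quotient.mk s x = Quotient.mk s b
      · exact ⟨none, hx.symm⟩
      · refine ⟨some (Quotient.mk _ x), ?_⟩
        change (if _ then _ else _) = _
        rw [if_neg hx]
  have := Nat.card_le_card_of_surjective g hg
  rwa [Finite.card_option] at this

/-- cycles of a permutation -/
def sc {D : Type} (π : Equiv.Perm D) : Setoid D := Equiv.Perm.SameCycle.setoid π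

theorem sc_iff {D : Type} {π : Equiv.Perm D} {x y : D} : sc π x y ↔ π.SameCycle x y := Iff.rfl

theorem sc_step {D : Type} (π : Equiv.Perm D) (x : D) : sc π x (π x) :=
  ⟨1, by simp⟩

theorem sc_le {D : Type} [Finite D] {π : Equiv.Perm D} {t : Setoid D} (h : ∀ x, t x (π x)) :
    sc π ≤ t := by
  intro x y hxy
  obtain ⟨n, rfl⟩ := (sc_iff.1 hxy).exists_nat_pow_eq
  clear hxy
  induction n with
  | zero => exact t.refl _
  | succ n ih => rw [pow_succ', Equiv.Perm.mul_apply]; exact t.trans ih (h _)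

/-- components -/
def comp {D : Type} (ρ τ : Equiv.Perm D) : Setoid D := sc ρ ⊔ sc τ

theorem sc_mul_le_comp {D : Type} [Finite D] (ρ τ : Equiv.Perm D) : sc (ρ * τ) ≤ comp ρ τ := by
  apply sc_le
  intro x
  exact (comp ρ τ).trans ((le_sup_right : sc τ ≤ comp ρ τ) (sc_step τ x))
    ((le_sup_left : sc ρ ≤ comp ρ τ) (sc_step ρ (τ x)))

/-- invariant bounding the number of cycles -/
noncomputable def Psi {D : Type} [Fintype D] [DecidableEq D] (ρ τ : Equiv.Perm D) : ℤ :=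
  4 * (nq (comp ρ τ) : ℤ) - 2 * (nq (sc (ρ * τ)) : ℤ) + (τ.support.card : ℤ)

theorem sc_swap_merge {D : Type} [Finite D] [DecidableEq D] (φ : Equiv.Perm D) {a b : D}
    (t : Setoid D) (h : sc φ ≤ t) (hab : t a b) : sc (φ * Equiv.swap a b) ≤ t := by
  apply sc_le
  intro x
  rw [Equiv.Perm.mul_apply]
  by_cases hxa : x = a
  · subst hxa
    rw [Equiv.swap_apply_left]
    exact t.trans hab (h (sc_step φ _))
  by_cases hxb : x = b
  · subst hxb
    rw [Equiv.swap_apply_right]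
    exact t.trans (t.symm hab) (h (sc_step φ _))
  rw [Equiv.swap_apply_of_ne_of_ne hxa hxb]
  exact h (sc_step φ _)

theorem sc_swap_joins {D : Type} [Finite D] [DecidableEq D] (φ : Equiv.Perm D) {a b : D}
    (hn : ¬ φ.SameCycle a b) : sc (φ * Equiv.swap a b) a b := by
  have hab : a ≠ b := fun h => hn (h ▸ Equiv.Perm.SameCycle.refl _ _)
  obtain ⟨m, hm0, hm⟩ : ∃ m : ℕ, 0 < m ∧ (φ ^ m) b = b :=
    ⟨orderOf φ, orderOf_pos φ, by rw [pow_orderOf_eq_one]; rfl⟩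
  -- walk along the cycle of `b`
  have key : ∀ k : ℕ, sc (φ * Equiv.swap a b) a ((φ ^ (k + 1)) b) := by
    intro k
    induction k with
    | zero =>
      refine ⟨1, ?_⟩
      simp
    | succ k ih =>
      have hne : (φ ^ (k + 1)) b ≠ a := by
        intro h
        apply hn
        refine Equiv.Perm.SameCycle.symm ⟨(k + 1 : ℕ), ?_⟩
        rw [zpow_natCast]; exact h
      by_cases hb : (φ ^ (k + 1)) b = b
      · rw [pow_succ', Equiv.Perm.mul_apply, hb]
        refine ⟨1, ?_⟩
        simp
      · refine Setoid.trans' _ ih ?_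
        have h2 : (φ * Equiv.swap a b) ((φ ^ (k + 1)) b) = (φ ^ (k + 1 + 1)) b := by
          rw [Equiv.Perm.mul_apply, Equiv.swap_apply_of_ne_of_ne hne hb, pow_succ' φ (k + 1),
            Equiv.Perm.mul_apply]
        rw [← h2]
        exact sc_step _ _
  have := key (m - 1)
  rwa [Nat.sub_add_cancel hm0, hm] at this

theorem Psi_step {D : Type} [Fintype D] [DecidableEq D] (ρ τ : Equiv.Perm D) {a b : D}
    (hab : a ≠ b) (ha : τ a = a) (hb : τ b = b) :
    Psi ρ τ ≤ Psi ρ (τ * Equiv.swap a b) ∧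
    (comp ρ τ a b → ¬ (ρ * τ).SameCycle a b → Psi ρ τ < Psi ρ (τ * Equiv.swap a b)) := by
  have hφ : ρ * (τ * Equiv.swap a b) = (ρ * τ) * Equiv.swap a b := (mul_assoc _ _ _).symm
  have hsupp : (τ * Equiv.swap a b).support.card = τ.support.card + 2 := by
    have : (τ * Equiv.swap a b).support = insert a (insert b τ.support) := by
      ext x
      simp only [Equiv.Perm.mem_support, Finset.mem_insert, Equiv.Perm.mul_apply]
      by_cases hxa : x = a
      · subst hxa; simp [hb, hab.symm]
      by_cases hxb : x = b
      · subst hxb; simp [ha, hab]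
      simp [Equiv.swap_apply_of_ne_of_ne hxa hxb, hxa, hxb]
    rw [this, Finset.card_insert_of_notMem, Finset.card_insert_of_notMem]
    · simp [hb]
    · simp [ha, hab]
  -- components
  have hk1 : nq (comp ρ τ) ≤ nq (comp ρ (τ * Equiv.swap a b)) + 1 := by
    refine (nq_mergeS (comp ρ τ) a b).trans (Nat.add_le_add_right (nq_anti ?_) 1)
    refine sup_le (le_trans le_sup_left (le_mergeS _ _ _)) ?_
    exact sc_swap_merge _ _ (le_trans le_sup_right (le_mergeS _ _ _)) (mergeS_rel _ _ _)
  have hk2 : comp ρ τ a b → nq (comp ρ τ) ≤ nq (comp ρ (τ * Equiv.swap a b)) := by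
    intro h
    apply nq_anti
    exact sup_le le_sup_left (sc_swap_merge _ _ le_sup_right h)
  have hc1 : nq (sc (ρ * (τ * Equiv.swap a b))) ≤ nq (sc (ρ * τ)) + 1 := by
    refine (nq_mergeS _ a b).trans (Nat.add_le_add_right (nq_anti ?_) 1)
    have h3 : ρ * τ = (ρ * (τ * Equiv.swap a b)) * Equiv.swap a b := by
      rw [hφ, mul_assoc, Equiv.swap_mul_self, mul_one]
    have := sc_swap_merge (ρ * (τ * Equiv.swap a b)) (a := a) (b := b)
      (mergeS (sc (ρ * (τ * Equiv.swap a b))) a b) (le_mergeS _ _ _) (mergeS_rel _ _ _)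
    rwa [← h3] at this
  have hc2 : ¬ (ρ * τ).SameCycle a b → nq (sc (ρ * (τ * Equiv.swap a b))) + 1 ≤ nq (sc (ρ * τ)) := by
    intro hn
    have hj : sc (ρ * (τ * Equiv.swap a b)) a b := by rw [hφ]; exact sc_swap_joins _ hn
    refine nq_lt ?_ hj hn
    have h3 : ρ * τ = (ρ * (τ * Equiv.swap a b)) * Equiv.swap a b := by
      rw [hφ, mul_assoc, Equiv.swap_mul_self, mul_one]
    have := sc_swap_merge (ρ * (τ * Equiv.swap a b)) (a := a) (b := b) _ le_rfl hj
    rwa [← h3] at this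
  unfold Psi
  rw [hsupp]
  push_cast
  constructor
  · by_cases hs : (ρ * τ).SameCycle a b
    · have := hk2 (sc_mul_le_comp ρ τ hs)
      omega
    · have := hc2 hs
      omega
  · intro hc hn
    have := hk2 hc
    have := hc2 hn
    omega

/-- `τ` consists of some of the two-cycles of `σ` -/
def SubInv {D : Type} (τ σ : Equiv.Perm D) : Prop := ∀ x, τ x = x ∨ τ x = σ x

theorem SubInv.fix {D : Type} {τ σ : Equiv.Perm D} (hσ : ∀ x, σ (σ x) = x) (h : SubInv τ σ)
    {a : D} (ha : τ a = a) : τ (σ a) = σ a := by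
  rcases h (σ a) with h1 | h1
  · exact h1
  · rw [hσ] at h1
    have : σ a = a := τ.injective (h1.trans ha.symm)
    rw [this, ha]

theorem SubInv.invol {D : Type} {τ σ : Equiv.Perm D} (hσ : ∀ x, σ (σ x) = x) (h : SubInv τ σ)
    (x : D) : τ (τ x) = x := by
  rcases h x with h1 | h1
  · rw [h1, h1]
  · rcases h (σ x) with h2 | h2
    · rw [h1, h2]
      exact τ.injective (by rw [h2, h1])
    · rw [h1, h2, hσ]

theorem SubInv.step {D : Type} [DecidableEq D] {τ σ : Equiv.Perm D} (hσ : ∀ x, σ (σ x) = x)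
    (h : SubInv τ σ) {a : D} (ha : τ a = a) : SubInv (τ * Equiv.swap a (σ a)) σ := by
  intro x
  have hb := h.fix hσ ha
  rw [Equiv.Perm.mul_apply]
  by_cases hxa : x = a
  · subst hxa; right; rw [Equiv.swap_apply_left, hb]
  by_cases hxb : x = σ a
  · subst hxb; right; rw [Equiv.swap_apply_right, ha, hσ]
  rw [Equiv.swap_apply_of_ne_of_ne hxa hxb]
  exact h x

theorem Psi_mono {D : Type} [Fintype D] [DecidableEq D] (ρ : Equiv.Perm D) {σ : Equiv.Perm D}
    (hσ : ∀ x, σ (σ x) = x) : ∀ (m : ℕ) (τ : Equiv.Perm D), SubInv τ σ →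
    (Finset.univ.filter (fun x => τ x ≠ σ x)).card = m → Psi ρ τ ≤ Psi ρ σ := by
  intro m
  induction m using Nat.strong_induction_on with
  | _ m ih =>
    intro τ h hm
    by_cases he : τ = σ
    · rw [he]
    obtain ⟨a, ha⟩ : ∃ a, τ a ≠ σ a := by
      by_contra hc
      push Not at hc
      exact he (Equiv.ext hc)
    have ha' : τ a = a := (h a).resolve_right ha
    have hb := h.fix hσ ha'
    have hab : a ≠ σ a := fun h' => ha (ha'.trans h')
    refine ((Psi_step ρ τ hab ha' hb).1).trans (ih _ ?_ _ (h.step hσ ha') rfl)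
    rw [← hm]
    apply Finset.card_lt_card
    refine ⟨?_, ?_⟩
    · intro x hx
      rw [Finset.mem_filter, Equiv.Perm.mul_apply] at hx
      replace hx := hx.2
      rw [Finset.mem_filter]
      refine ⟨Finset.mem_univ _, ?_⟩
      by_cases hxa : x = a
      · subst hxa; exact ha
      by_cases hxb : x = σ a
      · subst hxb
        rw [Equiv.swap_apply_right, ha', hσ] at hx
        exact absurd rfl hx
      rwa [Equiv.swap_apply_of_ne_of_ne hxa hxb] at hx
    · intro hsub
      have := hsub (Finset.mem_filter.2 ⟨Finset.mem_univ a, ha⟩)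
      rw [Finset.mem_filter, Equiv.Perm.mul_apply, Equiv.swap_apply_left] at this
      exact this.2 hb

theorem Psi_one_le {D : Type} [Fintype D] [DecidableEq D] (ρ : Equiv.Perm D) {σ : Equiv.Perm D}
    (hσ : ∀ x, σ (σ x) = x) : Psi ρ 1 ≤ Psi ρ σ :=
  Psi_mono ρ hσ _ 1 (fun _ => Or.inl rfl) rfl

theorem planar_lemma {D : Type} [Fintype D] [DecidableEq D] {ρ σ : Equiv.Perm D}
    (hσ : ∀ x, σ (σ x) = x) (hP : Psi ρ σ ≤ Psi ρ 1) {τ : Equiv.Perm D} (h : SubInv τ σ)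
    {a : D} (ha : τ a = a) (hne : σ a ≠ a) (hc : comp ρ τ a (σ a)) :
    (ρ * τ).SameCycle a (σ a) := by
  by_contra hn
  have h1 := (Psi_step ρ τ hne.symm ha (h.fix hσ ha)).2 hc hn
  have h2 := Psi_mono ρ hσ _ _ (h.step hσ ha) rfl
  have h3 : Psi ρ 1 ≤ Psi ρ τ := Psi_one_le ρ (h.invol hσ)
  omega

end K3MM

namespace K3MM

/-! ### computation -/

/-- Boolean case distinction. -/
noncomputable def bc {β : Type} (c : Bool) (t e : β) : β := @Bool.rec (fun _ => β) e t c

/-- Evaluate a natural number before passing it on. -/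
noncomputable def force {β : Type} (v : ℕ) (k : ℕ → β) : β :=
  @Nat.rec (fun _ => β) (k 0) (fun m _ => k m) (Nat.add v 1)

/-- Read the `i`-th base 32 digit. -/
def getD32 (s i : ℕ) : ℕ := Nat.mod (Nat.shiftRight s (Nat.mul 5 i)) 32

/-- Overwrite the `i`-th base 32 digit. -/
def setD32 (s i v : ℕ) : ℕ := Nat.xor s (Nat.shiftLeft (Nat.xor (getD32 s i) v) (Nat.mul 5 i))

/-- Find the first occurrence of `b` in a list; pass position, prefix and suffix on. -/
noncomputable def findK {α β : Type} (eq : α → α → Bool) (b : α) (z : β) (c : List α) :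
    (ℕ → List α → List α → β) → β :=
  @List.rec α (fun _ => (ℕ → List α → List α → β) → β) (fun _ => z)
    (fun x c ih k => bc (eq b x) (k 0 [] c)
      (ih (fun j pre post => k (Nat.succ j) (x :: pre) post))) c

/-- One peeling step at the open dart `a`, the rest of the current boundary being `c`;
`b` is the partner of `a`. -/
noncomputable def stepK {α β : Type} (eq : α → α → Bool) (ρ : α → α) (a b : α) (c : List α)
    (r : List (List α)) (k : ℕ → List (List α) → β) : β :=
  bc (eq b a) (k 0 (c :: r))
  (findK eq b 
    (bc (eq (ρ b) b) (k 1 (c :: r))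
      (k 2 ((ρ b :: ρ (ρ b) :: c) :: r))) c
    (fun j pre post => k (Nat.add 3 j) (pre :: post :: r)))

/-- The peeling word. -/
noncomputable def peel {α : Type} (eq : α → α → Bool) (σ ρ : α → α) (f : ℕ) : List (List α) → List ℕ :=
  @Nat.rec (fun _ => List (List α) → List ℕ) (fun _ => [])
    (fun _ ih st => @List.rec (List α) (fun _ => List ℕ) []
      (fun c r _ => @List.rec α (fun _ => List ℕ) (ih r)
        (fun a c _ => stepK eq ρ a (σ a) c r fun s st => s :: ih st) c) st) f

/-- Lazy lexicographic test `w ≤ peel ..` (for `q = true`) or `w = peel ..` (for `q = false`). -/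
noncomputable def lePeel (q : Bool) (s ρ : ℕ) (f : ℕ) : List (List ℕ) → List ℕ → Bool :=
  @Nat.rec (fun _ => List (List ℕ) → List ℕ → Bool) (fun _ w => w.isEmpty)
    (fun _ ih st w => @List.rec (List ℕ) (fun _ => Bool) (w.isEmpty)
      (fun c r _ => @List.rec ℕ (fun _ => Bool) (ih r w)
        (fun a c _ => @List.rec ℕ (fun _ => Bool) q
          (fun x w _ => force (getD32 s a) fun b => stepK Nat.beq (getD32 ρ) a b c r
            fun s st => bc (Nat.beq x s) (ih st w) (bc q (Nat.ble x s) false)) w) c) st) f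

/-- The rooted word. -/
noncomputable def key {α : Type} (eq : α → α → Bool) (σ ρ : α → α) (d : α) : List ℕ :=
  bc (eq (ρ d) d) (0 :: peel eq σ ρ 60 [[d]]) (1 :: peel eq σ ρ 60 [[d, ρ d, ρ (ρ d)]])

/-- Lazy test `w ≤ key d` (for `q = true`) or `w = key d` (for `q = false`). -/
noncomputable def leKey (q : Bool) (s r : ℕ) (d : ℕ) (w : List ℕ) : Bool :=
  @List.rec ℕ (fun _ => Bool) q (fun x w _ =>
    force (getD32 r d) fun d' =>
    bc (Nat.beq d' d) (bc (Nat.beq x 0) (lePeel q s r 60 [[d]] w) false)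
    (bc (Nat.beq x 1) (lePeel q s r 60 [[d, d', getD32 r d']] w)
      (bc q (Nat.ble x 1) false))) w

/-- bounded universal quantifier -/
noncomputable def allLT (n : ℕ) (p : ℕ → Bool) : Bool :=
  @Nat.rec (fun _ => Bool) true (fun n ih => bc (p n) ih false) n

/-- bounded counting -/
noncomputable def cntLT (n : ℕ) (p : ℕ → Bool) : ℕ :=
  @Nat.rec (fun _ => ℕ) 0 (fun n ih => bc (p n) (Nat.succ ih) ih) n

/-- does the `t`-orbit of `x` return to `i` staying above `i`? -/
noncomputable def returns (t : ℕ → ℕ) (i : ℕ) (f : ℕ) : ℕ → Bool :=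
  @Nat.rec (fun _ => ℕ → Bool) (fun _ => false)
    (fun _ ih x => force (t x) fun y => bc (Nat.beq y i) true (bc (Nat.ble y i) false (ih y))) f

/-- validity of a table -/
noncomputable def validB (n : ℕ) (σ ρ : ℕ → ℕ) : Bool :=
  bc (allLT n (fun i => force (σ i) fun si => force (ρ i) fun ri => force (ρ ri) fun rri =>
    bc (Nat.ble n si) false <| bc (Nat.ble n ri) false <| bc (Nat.beq (σ si) i)
      (bc (Nat.beq (ρ rri) i)
       (bc (Nat.beq i 0) true <| bc (Nat.ble i si) (bc (Nat.ble i ri) (bc (Nat.ble i rri)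
         false true) true) true) false) false))
  (force (cntLT n (fun i => Nat.beq (σ i) i)) fun e2 =>
  force (cntLT n (fun i => Nat.beq (ρ i) i)) fun e3 =>
  bc (Nat.ble 1 n) (
  bc (Nat.ble (Nat.add (Nat.add n (Nat.mul 3 e2)) (Nat.mul 2 e3)) 24)
  (Nat.beq (Nat.add (Nat.add (Nat.mul 6 (cntLT n (fun i => returns (fun x => σ (ρ x)) i 25 i)))
     (Nat.mul 3 e2)) (Nat.mul 4 e3)) (Nat.add n 12)) false) false) false

/-- value of a leaf -/
noncomputable def leafVal (n s r : ℕ) (w : List ℕ) : ℕ :=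
  bc (allLT n (fun d => leKey true s r d w))
    (bc (validB n (getD32 s) (getD32 r))
      (bc (leKey false s r 0 w) 1 10000) 10000)
  0

/-- reverse, passed on -/
noncomputable def revK {β : Type} (l : List ℕ) : List ℕ → (List ℕ → β) → β :=
  @List.rec ℕ (fun _ => List ℕ → (List ℕ → β) → β) (fun acc k => k acc)
    (fun x _ ih acc k => ih (x :: acc) k) l

/-- sum over ways of splitting a list -/
noncomputable def splitSum (k : ℕ → List ℕ → ℕ → List ℕ → ℕ) (c : List ℕ) : ℕ → List ℕ → ℕ :=
  @List.rec ℕ (fun _ => ℕ → List ℕ → ℕ) (fun _ _ => 0)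
   (fun x c ih j pre => Nat.add (revK pre [] fun p => force j fun j => k j p x c)
     (ih (Nat.succ j) (x :: pre))) c

/-- total -/
noncomputable def total (pU pH : Bool) (f : ℕ) : ℕ → List (List ℕ) → ℕ → ℕ → ℕ → List ℕ → ℕ :=
  @Nat.rec (fun _ => ℕ → List (List ℕ) → ℕ → ℕ → ℕ → List ℕ → ℕ) (fun _ _ _ _ _ _ => 0)
  (fun _ ih b st n s r w =>
    @List.rec (List ℕ) (fun _ => ℕ) (revK w [] (leafVal n s r))
    (fun c st _ => @List.rec ℕ (fun _ => ℕ) (ih b st n s r w)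
      (fun a c _ =>
        Nat.add
     (@Nat.rec (fun _ => ℕ) 0 (fun b _ =>
        Nat.add (bc pH (force (setD32 s a a) fun s => ih b (c :: st) n s r (0 :: w)) 0)
        (force (setD32 (setD32 s a n) n a) fun s => force (Nat.add n 1) fun n1 =>
        (Nat.add (bc pU (force (setD32 r n n) fun r => ih b (c :: st) n1 s r (1 :: w)) 0)
          (force (Nat.add n 2) fun n2 => force (Nat.add n 3) fun n3 =>
            force (setD32 (setD32 (setD32 r n n1) n1 n2) n2 n) fun r =>
          ih b ((n1 :: n2 :: c) :: st) n3 s r (2 :: w))))) b)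
     (splitSum (fun j pre x post => force (setD32 (setD32 s a x) x a) fun s =>
        ih b (pre :: post :: st) n s r
          ((Nat.add 3 j) :: w)) c 0 [])) c) st) f


end K3MM

namespace K3MM

set_option maxHeartbeats 0

theorem tot1 : total true true 60 7 [[0]] 1 0 0 [0] = 2211 := by decide +kernel
theorem tot2 : total false true 60 6 [[1, 2]] 3 0 65 [0, 1] = 792 := by decide +kernel
theorem tot3 : total false false 60 7 [[0, 1, 2]] 3 0 65 [1] = 225 := by decide +kernel

end K3MM

namespace K3MM

/-! ### specification of the computation -/

theorem bc_eq {β : Type} (c : Bool) (t e : β) : bc c t e = if c = true then t else e := by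
  cases c <;> rfl

theorem force_eq {β : Type} (v : ℕ) (k : ℕ → β) : force v k = k v := rfl

theorem getD32_def (s i : ℕ) : getD32 s i = (s >>> (5 * i)) % 32 := rfl

theorem setD32_def (s i v : ℕ) : setD32 s i v = s ^^^ ((getD32 s i ^^^ v) <<< (5 * i)) := rfl

theorem getD32_testBit (s i k : ℕ) :
    (getD32 s i).testBit k = (decide (k < 5) && s.testBit (5 * i + k)) := by
  rw [getD32_def, show (32 : ℕ) = 2 ^ 5 by norm_num, Nat.testBit_mod_two_pow,
    Nat.testBit_shiftRight]

theorem getD32_setD32 (s i v j : ℕ) (hv : v < 32) :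
    getD32 (setD32 s i v) j = if j = i then v else getD32 s j := by
  apply Nat.eq_of_testBit_eq
  intro k
  have hvk : 5 ≤ k → v.testBit k = false := fun hk =>
    Nat.testBit_lt_two_pow (lt_of_lt_of_le hv (by
      calc 32 = 2 ^ 5 := by norm_num
        _ ≤ 2 ^ k := Nat.pow_le_pow_right (by norm_num) hk))
  rw [getD32_testBit, setD32_def, Nat.testBit_xor, Nat.testBit_shiftLeft, Nat.testBit_xor,
    getD32_testBit]
  split_ifs with h
  · subst h
    by_cases hk : k < 5
    · have : 5 * j + k - 5 * j = k := by omega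
      simp [hk, this]
    · simp [hk, hvk (by omega)]
  · rw [getD32_testBit]
    by_cases hk : k < 5
    · rcases Nat.lt_or_gt_of_ne h with h | h
      · have : ¬ (5 * j + k ≥ 5 * i) := by omega
        simp [hk, this]
      · have h2 : ¬ (5 * j + k - 5 * i < 5) := by omega
        have h3 := Nat.testBit_lt_two_pow (i := 5 * j + k - 5 * i) (x := v)
          (lt_of_lt_of_le hv (by
          calc 32 = 2 ^ 5 := by norm_num
            _ ≤ 2 ^ _ := Nat.pow_le_pow_right (by norm_num) (by omega)))
        simp [hk, h2, h3]
    · simp [hk]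

/-- positions in a list -/
def splits : List ℕ → ℕ → List ℕ → List (ℕ × List ℕ × ℕ × List ℕ)
  | [], _, _ => []
  | x :: c, j, pre => (j, pre.reverse, x, c) :: splits c (j + 1) (x :: pre)

theorem revK_eq {β : Type} (l acc : List ℕ) (k : List ℕ → β) :
    revK l acc k = k (l.reverse ++ acc) := by
  induction l generalizing acc with
  | nil => rfl
  | cons x l ih =>
    change revK l (x :: acc) k = _
    rw [ih]; simp

theorem splitSum_eq (k : ℕ → List ℕ → ℕ → List ℕ → ℕ) (c : List ℕ) (j : ℕ) (pre : List ℕ) :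
    splitSum k c j pre = ((splits c j pre).map fun q => k q.1 q.2.1 q.2.2.1 q.2.2.2).sum := by
  induction c generalizing j pre with
  | nil => rfl
  | cons x c ih =>
    change Nat.add (revK pre [] fun p => force j fun j => k j p x c)
      (splitSum k c (j + 1) (x :: pre)) = _
    rw [ih, revK_eq, force_eq]
    simp [splits]

theorem mem_splits (c : List ℕ) (j : ℕ) (pre : List ℕ) (q : ℕ × List ℕ × ℕ × List ℕ)
    (h : q ∈ splits c j pre) : j ≤ q.1 := by
  induction c generalizing j pre with
  | nil => simp [splits] at h
  | cons x c ih =>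
    rw [splits, List.mem_cons] at h
    rcases h with rfl | h
    · exact le_rfl
    · exact (Nat.le_succ j).trans (ih _ _ h)

theorem splits_nodup (c : List ℕ) (j : ℕ) (pre : List ℕ) :
    (splits c j pre).Pairwise (fun q q' => q.1 ≠ q'.1) := by
  induction c generalizing j pre with
  | nil => simp [splits]
  | cons x c ih =>
    rw [splits, List.pairwise_cons]
    refine ⟨fun q hq => ?_, ih _ _⟩
    have := mem_splits _ _ _ _ hq
    simp only
    omega

theorem splits_mem (p : List ℕ) (x : ℕ) (post : List ℕ) (j : ℕ) (pre : List ℕ) :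
    (j + p.length, pre.reverse ++ p, x, post) ∈ splits (p ++ x :: post) j pre := by
  induction p generalizing j pre with
  | nil => simp [splits]
  | cons y p ih =>
    have := ih (j + 1) (y :: pre)
    simp only [List.cons_append, splits, List.mem_cons]
    right
    convert this using 2
    · simp; omega
    · simp

/-- the leaves of the search tree -/
def leaves (pU pH : Bool) : ℕ → ℕ → List (List ℕ) → ℕ → ℕ → ℕ → List ℕ →
    List (ℕ × ℕ × ℕ × List ℕ)
  | 0, _, _, _, _, _, _ => []
  | _ + 1, _, [], n, s, r, w => [(n, s, r, w)]
  | f + 1, b, [] :: st, n, s, r, w => leaves pU pH f b st n s r w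
  | f + 1, b, (a :: c) :: st, n, s, r, w =>
    (match b with
      | 0 => []
      | b + 1 =>
        (if pH = true then leaves pU pH f b (c :: st) n (setD32 s a a) r (0 :: w) else []) ++
        ((if pU = true then
          leaves pU pH f b (c :: st) (n + 1) (setD32 (setD32 s a n) n a) (setD32 r n n) (1 :: w)
          else []) ++
        leaves pU pH f b (((n + 1) :: (n + 2) :: c) :: st) (n + 3) (setD32 (setD32 s a n) n a)
          (setD32 (setD32 (setD32 r n (n + 1)) (n + 1) (n + 2)) (n + 2) n) (2 :: w))) ++
    (splits c 0 []).flatMap fun q =>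
      leaves pU pH f b (q.2.1 :: q.2.2.2 :: st) n (setD32 (setD32 s a q.2.2.1) q.2.2.1 a) r
        ((3 + q.1) :: w)

theorem leaves_cons (pU pH : Bool) (f b a : ℕ) (c : List ℕ) (st : List (List ℕ)) (n s r : ℕ)
    (w : List ℕ) : leaves pU pH (f + 1) b ((a :: c) :: st) n s r w =
    (match b with
      | 0 => []
      | b + 1 =>
        (if pH = true then leaves pU pH f b (c :: st) n (setD32 s a a) r (0 :: w) else []) ++
        ((if pU = true then
          leaves pU pH f b (c :: st) (n + 1) (setD32 (setD32 s a n) n a) (setD32 r n n) (1 :: w)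
          else []) ++
        leaves pU pH f b (((n + 1) :: (n + 2) :: c) :: st) (n + 3) (setD32 (setD32 s a n) n a)
          (setD32 (setD32 (setD32 r n (n + 1)) (n + 1) (n + 2)) (n + 2) n) (2 :: w))) ++
    (splits c 0 []).flatMap fun q =>
      leaves pU pH f b (q.2.1 :: q.2.2.2 :: st) n (setD32 (setD32 s a q.2.2.1) q.2.2.1 a) r
        ((3 + q.1) :: w) := by
  cases b <;> simp only [leaves]

/-- value of a stored leaf -/
noncomputable def lval (l : ℕ × ℕ × ℕ × List ℕ) : ℕ := leafVal l.1 l.2.1 l.2.2.1 l.2.2.2.reverse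

theorem total_eq (pU pH : Bool) (f b : ℕ) (st : List (List ℕ)) (n s r : ℕ) (w : List ℕ) :
    total pU pH f b st n s r w = ((leaves pU pH f b st n s r w).map lval).sum := by
  induction f generalizing b st n s r w with
  | zero => rfl
  | succ f ih =>
    rcases st with _ | ⟨_ | ⟨a, c⟩, st⟩
    · change revK w [] (leafVal n s r) = _
      rw [revK_eq]
      simp [leaves, lval]
    · change total pU pH f b st n s r w = _
      rw [ih]
      simp [leaves]
    · have hM : splitSum (fun j pre x post => force (setD32 (setD32 s a x) x a) fun s =>
        total pU pH f b (pre :: post :: st) n s r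
          ((Nat.add 3 j) :: w)) c 0 [] = (((splits c 0 []).flatMap fun q =>
        leaves pU pH f b (q.2.1 :: q.2.2.2 :: st) n (setD32 (setD32 s a q.2.2.1) q.2.2.1 a) r
        ((3 + q.1) :: w)).map lval).sum := by
        rw [splitSum_eq]
        simp only [force_eq, ih]
        generalize splits c 0 [] = l
        induction l with
        | nil => simp
        | cons q l ihl => simp only [List.map_cons, List.sum_cons, ihl, List.flatMap_cons,
            List.map_append, List.sum_append]; rfl
      cases b with
      | zero =>
        change Nat.add 0 (splitSum (fun j pre x post => force (setD32 (setD32 s a x) x a) fun s =>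
          total pU pH f 0 (pre :: post :: st) n s r ((Nat.add 3 j) :: w)) c 0 []) = _
        rw [hM, leaves]
        simp
      | succ b =>
        change Nat.add (Nat.add (bc pH (total pU pH f b (c :: st) n (setD32 s a a) r (0 :: w)) 0)
          (Nat.add (bc pU (total pU pH f b (c :: st) (n + 1) (setD32 (setD32 s a n) n a)
            (setD32 r n n) (1 :: w)) 0)
           (total pU pH f b (((n + 1) :: (n + 2) :: c) :: st) (n + 3) (setD32 (setD32 s a n) n a)
          (setD32 (setD32 (setD32 r n (n + 1)) (n + 1) (n + 2)) (n + 2) n) (2 :: w))))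
          (splitSum (fun j pre x post => force (setD32 (setD32 s a x) x a) fun s =>
          total pU pH f (b + 1) (pre :: post :: st) n s r ((Nat.add 3 j) :: w)) c 0 []) = _
        rw [hM, leaves]
        simp only [ih, bc_eq]
        cases pU <;> cases pH <;> simp [add_assoc]

/-- words grow, and without half edges the symbol `0` does not occur -/
theorem leaves_suffix (pU pH : Bool) (f b : ℕ) (st : List (List ℕ)) (n s r : ℕ) (w : List ℕ)
    (l : ℕ × ℕ × ℕ × List ℕ) (h : l ∈ leaves pU pH f b st n s r w) :
    ∃ u, l.2.2.2 = u ++ w ∧ (pH = false → 0 ∉ u) := by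
  induction f generalizing b st n s r w with
  | zero => simp [leaves] at h
  | succ f ih =>
    have key : ∀ b st n s r x, (pH = false → x ≠ 0) → l ∈ leaves pU pH f b st n s r (x :: w) →
        ∃ u, l.2.2.2 = u ++ w ∧ (pH = false → 0 ∉ u) := by
      intro b st n s r x hx h
      obtain ⟨u, hu, h0⟩ := ih _ _ _ _ _ _ h
      refine ⟨u ++ [x], by simp [hu], fun hp => ?_⟩
      simp [h0 hp, (hx hp).symm]
    rcases st with _ | ⟨_ | ⟨a, c⟩, st⟩
    · simp only [leaves, List.mem_singleton] at h
      subst h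
      exact ⟨[], by simp⟩
    · simp only [leaves] at h
      exact ih _ _ _ _ _ _ h
    · rw [leaves_cons, List.mem_append] at h
      rcases h with h | h
      · cases b with
        | zero => simp at h
        | succ b =>
          simp only [List.mem_append] at h
          rcases h with h | h | h
          · split_ifs at h with hp
            · exact key _ _ _ _ _ _ (by simp [hp]) h
            · simp at h
          · split_ifs at h with hp
            · exact key _ _ _ _ _ _ (by simp) h
            · simp at h
          · exact key _ _ _ _ _ _ (by simp) h
      · rw [List.mem_flatMap] at h
        obtain ⟨q, hq, h⟩ := h
        exact key _ _ _ _ _ _ (by omega) h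

/-- last letter in front of `w` -/
theorem suffix_cons_inj {u v w : List ℕ} {x y : ℕ} (h : u ++ x :: w = v ++ y :: w) : x = y := by
  have h2 : u.length = v.length := by
    have := congrArg List.length h
    simp at this
    omega
  have := List.append_inj_right h h2
  simpa using this

theorem leaves_nodup (pU pH : Bool) (f b : ℕ) (st : List (List ℕ)) (n s r : ℕ) (w : List ℕ) :
    (leaves pU pH f b st n s r w).Pairwise (fun l l' => l.2.2.2 ≠ l'.2.2.2) := by
  induction f generalizing b st n s r w with
  | zero => simp [leaves]
  | succ f ih =>
    have key : ∀ b st n s r x b' st' n' s' r' y, x ≠ y →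
        ∀ l ∈ leaves pU pH f b st n s r (x :: w), ∀ l' ∈ leaves pU pH f b' st' n' s' r' (y :: w),
        l.2.2.2 ≠ l'.2.2.2 := by
      intro b st n s r x b' st' n' s' r' y hxy l hl l' hl' he
      obtain ⟨u, hu, -⟩ := leaves_suffix _ _ _ _ _ _ _ _ _ _ hl
      obtain ⟨u', hu', -⟩ := leaves_suffix _ _ _ _ _ _ _ _ _ _ hl'
      exact hxy (suffix_cons_inj (hu.symm.trans (he.trans hu')))
    rcases st with _ | ⟨_ | ⟨a, c⟩, st⟩
    · simp [leaves]
    · simp only [leaves]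
      exact ih _ _ _ _ _ _
    · rw [leaves_cons, List.pairwise_append]
      refine ⟨?_, ?_, ?_⟩
      · cases b with
        | zero => simp
        | succ b =>
          simp only [List.pairwise_append, List.mem_append]
          refine ⟨?_, ⟨?_, ih _ _ _ _ _ _, ?_⟩, ?_⟩
          · split_ifs
            · exact ih _ _ _ _ _ _
            · simp
          · split_ifs
            · exact ih _ _ _ _ _ _
            · simp
          · split_ifs
            · exact key _ _ _ _ _ _ _ _ _ _ _ _ (by norm_num)
            · simp
          · intro l hl l' hl'
            split_ifs at hl
            · rcases hl' with hl' | hl'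
              · split_ifs at hl'
                · exact key _ _ _ _ _ _ _ _ _ _ _ _ (by norm_num) l hl l' hl'
                · simp at hl'
              · exact key _ _ _ _ _ _ _ _ _ _ _ _ (by norm_num) l hl l' hl'
            · simp at hl
      · rw [List.pairwise_flatMap]
        refine ⟨fun q _ => ih _ _ _ _ _ _, ?_⟩
        refine (splits_nodup c 0 []).imp ?_
        intro q q' hq l hl l' hl'
        exact key _ _ _ _ _ _ _ _ _ _ _ _ (by omega) l hl l' hl'
      · intro l hl l' hl'
        rw [List.mem_flatMap] at hl'
        obtain ⟨q, hq, hl'⟩ := hl'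
        cases b with
        | zero => simp at hl
        | succ b =>
          simp only [List.mem_append] at hl
          rcases hl with h | h | h
          · split_ifs at h with hp
            · exact key _ _ _ _ _ _ _ _ _ _ _ _ (by omega) l h l' hl'
            · simp at h
          · split_ifs at h with hp
            · exact key _ _ _ _ _ _ _ _ _ _ _ _ (by omega) l h l' hl'
            · simp at h
          · exact key _ _ _ _ _ _ _ _ _ _ _ _ (by omega) l h l' hl'

end K3MM

namespace K3MM

/-! ### peeling words -/

theorem ccl (x y : ℕ) (w l : List ℕ) : x :: w ≤ y :: l ↔ x < y ∨ (x = y ∧ w ≤ l) := by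
  rw [le_iff_lt_or_eq, le_iff_lt_or_eq (a := w)]
  have : x :: w < y :: l ↔ x < y ∨ (x = y ∧ w < l) := by
    constructor
    · intro h
      rcases h with _ | h | h
      · exact Or.inl h
      · exact Or.inr ⟨rfl, h⟩
    · rintro (h | ⟨rfl, h⟩)
      · exact List.Lex.rel h
      · exact List.Lex.cons h
  rw [this]
  simp
  tauto

theorem ccn (l : List ℕ) : [] ≤ l := by
  cases l with
  | nil => exact le_rfl
  | cons x l => exact le_of_lt List.Lex.nil

theorem findK_not_mem {α β : Type} {eq : α → α → Bool} (heq : ∀ x y, eq x y = true ↔ x = y)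
    (b : α) (z : β) (c : List α) (k : ℕ → List α → List α → β) (h : b ∉ c) :
    findK eq b z c k = z := by
  induction c generalizing k with
  | nil => rfl
  | cons x c ih =>
    change bc (eq b x) (k 0 [] c) (findK eq b z c _) = z
    rw [bc_eq, if_neg, ih]
    · exact fun hb => h (List.mem_cons_of_mem _ hb)
    · rw [heq]
      rintro rfl
      exact h List.mem_cons_self

theorem findK_mem {α β : Type} {eq : α → α → Bool} (heq : ∀ x y, eq x y = true ↔ x = y)
    (b : α) (z : β) (pre post : List α) (k : ℕ → List α → List α → β) (h : b ∉ pre) :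
    findK eq b z (pre ++ b :: post) k = k pre.length pre post := by
  induction pre generalizing k with
  | nil =>
    change bc (eq b b) _ _ = _
    rw [bc_eq, if_pos ((heq _ _).2 rfl)]
    rfl
  | cons x c ih =>
    change bc (eq b x) _ (findK eq b z (c ++ b :: post) _) = _
    rw [bc_eq, if_neg, ih]
    · rfl
    · exact fun hb => h (List.mem_cons_of_mem _ hb)
    · rw [heq]
      rintro rfl
      exact h List.mem_cons_self

theorem findK_map {α β γ : Type} (g : β → γ) (eq : α → α → Bool)
    (b : α) (z : β) (c : List α) (k : ℕ → List α → List α → β) :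
    g (findK eq b z c k) = findK eq b (g z) c (fun j p q => g (k j p q)) := by
  induction c generalizing k with
  | nil => rfl
  | cons x c ih =>
    change g (bc (eq b x) (k 0 [] c) (findK eq b z c _)) =
      bc (eq b x) _ (findK eq b (g z) c _)
    rw [bc_eq, bc_eq]
    split_ifs
    · rfl
    · rw [ih]

theorem stepK_map {α β γ : Type} (g : β → γ) (eq : α → α → Bool) (ρ : α → α) (a b : α)
    (c : List α) (r : List (List α)) (k : ℕ → List (List α) → β) :
    g (stepK eq ρ a b c r k) = stepK eq ρ a b c r (fun s st => g (k s st)) := by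
  unfold stepK
  simp only [bc_eq]
  split_ifs
  · rfl
  all_goals rw [findK_map g]

section
variable {α : Type} {eq : α → α → Bool} (σ ρ : α → α)

theorem peel_zero (st : List (List α)) : peel eq σ ρ 0 st = [] := rfl
theorem peel_nil (f : ℕ) : peel eq σ ρ (f + 1) [] = [] := rfl
theorem peel_nil_cons (f : ℕ) (r : List (List α)) :
    peel eq σ ρ (f + 1) ([] :: r) = peel eq σ ρ f r := rfl
theorem peel_cons (f : ℕ) (a : α) (c : List α) (r : List (List α)) :
    peel eq σ ρ (f + 1) ((a :: c) :: r) =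
      stepK eq ρ a (σ a) c r fun s st => s :: peel eq σ ρ f st := rfl

end

section
variable {α : Type} {eq : α → α → Bool}

theorem peel_H (heq : ∀ x y, eq x y = true ↔ x = y) (σ ρ : α → α)
    (f : ℕ) (a : α) (c : List α) (r : List (List α)) (h : σ a = a) :
    peel eq σ ρ (f + 1) ((a :: c) :: r) = 0 :: peel eq σ ρ f (c :: r) := by
  rw [peel_cons, stepK, bc_eq, if_pos ((heq _ _).2 h)]

theorem peel_U (heq : ∀ x y, eq x y = true ↔ x = y) (σ ρ : α → α)
    (f : ℕ) (a : α) (c : List α) (r : List (List α)) (h : σ a ≠ a) (hc : σ a ∉ c)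
    (hu : ρ (σ a) = σ a) :
    peel eq σ ρ (f + 1) ((a :: c) :: r) = 1 :: peel eq σ ρ f (c :: r) := by
  rw [peel_cons, stepK, bc_eq, if_neg (by rwa [heq]), findK_not_mem heq _ _ _ _ hc, bc_eq,
    if_pos ((heq _ _).2 hu)]

theorem peel_V (heq : ∀ x y, eq x y = true ↔ x = y) (σ ρ : α → α)
    (f : ℕ) (a : α) (c : List α) (r : List (List α)) (h : σ a ≠ a) (hc : σ a ∉ c)
    (hu : ρ (σ a) ≠ σ a) :
    peel eq σ ρ (f + 1) ((a :: c) :: r) =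
      2 :: peel eq σ ρ f ((ρ (σ a) :: ρ (ρ (σ a)) :: c) :: r) := by
  rw [peel_cons, stepK, bc_eq, if_neg (by rwa [heq]), findK_not_mem heq _ _ _ _ hc, bc_eq,
    if_neg (by rwa [heq])]

theorem peel_M (heq : ∀ x y, eq x y = true ↔ x = y) (σ ρ : α → α)
    (f : ℕ) (a : α) (pre post : List α) (r : List (List α)) (h : σ a ≠ a)
    (hc : σ a ∉ pre) :
    peel eq σ ρ (f + 1) ((a :: (pre ++ σ a :: post)) :: r) =
      (3 + pre.length) :: peel eq σ ρ f (pre :: post :: r) := by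
  rw [peel_cons, stepK, bc_eq, if_neg (by rwa [heq]), findK_mem heq _ _ _ _ _ hc]
  rfl

theorem key_fix (heq : ∀ x y, eq x y = true ↔ x = y) (σ ρ : α → α)
    (d : α) (h : ρ d = d) : key eq σ ρ d = 0 :: peel eq σ ρ 60 [[d]] := by
  rw [key, bc_eq, if_pos ((heq _ _).2 h)]

theorem key_nfix (heq : ∀ x y, eq x y = true ↔ x = y) (σ ρ : α → α)
    (d : α) (h : ρ d ≠ d) :
    key eq σ ρ d = 1 :: peel eq σ ρ 60 [[d, ρ d, ρ (ρ d)]] := by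
  rw [key, bc_eq, if_neg (by rwa [heq])]

theorem peel_nat (heq : ∀ x y, eq x y = true ↔ x = y) (σ ρ : α → α)
    {β : Type} {eq' : β → β → Bool} (heq' : ∀ x y, eq' x y = true ↔ x = y)
    {σ' ρ' : β → β} (ι : α → β) (hi : Function.Injective ι) (hs : ∀ x, ι (σ x) = σ' (ι x))
    (hr : ∀ x, ι (ρ x) = ρ' (ι x)) (f : ℕ) (st : List (List α)) :
    peel eq' σ' ρ' f (st.map (List.map ι)) = peel eq σ ρ f st := by
  induction f generalizing st with
  | zero => rfl
  | succ f ih =>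
    rcases st with _ | ⟨_ | ⟨a, c⟩, st⟩
    · rfl
    · simp only [List.map_cons, List.map_nil, peel_nil_cons, ih]
    · simp only [List.map_cons]
      by_cases h1 : σ a = a
      · rw [peel_H heq _ _ _ _ _ _ h1, peel_H heq' _ _ _ _ _ _ (by rw [← hs, h1]), ← ih]
        simp
      · have h1' : σ' (ι a) ≠ ι a := by rw [← hs]; exact fun h => h1 (hi h)
        by_cases h2 : σ a ∈ c
        · obtain ⟨pre, post, rfl, hp⟩ := List.eq_append_cons_of_mem h2
          have : σ' (ι a) ∉ pre.map ι := by
            rw [← hs, List.mem_map_of_injective hi]; exact hp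
          rw [List.map_append, List.map_cons, hs, peel_M heq _ _ _ _ _ _ _ h1 hp,
            peel_M heq' _ _ _ _ _ _ _ h1' this, ← ih]
          simp
        · have h2' : σ' (ι a) ∉ c.map ι := by
            rw [← hs, List.mem_map_of_injective hi]; exact h2
          by_cases h3 : ρ (σ a) = σ a
          · rw [peel_U heq _ _ _ _ _ _ h1 h2 h3,
              peel_U heq' _ _ _ _ _ _ h1' h2' (by rw [← hs, ← hr, h3]), ← ih]
            simp
          · rw [peel_V heq _ _ _ _ _ _ h1 h2 h3,
              peel_V heq' _ _ _ _ _ _ h1' h2' (by rw [← hs, ← hr]; exact fun h => h3 (hi h)),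
              ← ih]
            simp [hs, hr]

theorem key_nat (heq : ∀ x y, eq x y = true ↔ x = y) (σ ρ : α → α)
    {β : Type} {eq' : β → β → Bool} (heq' : ∀ x y, eq' x y = true ↔ x = y)
    {σ' ρ' : β → β} (ι : α → β) (hi : Function.Injective ι) (hs : ∀ x, ι (σ x) = σ' (ι x))
    (hr : ∀ x, ι (ρ x) = ρ' (ι x)) (d : α) : key eq' σ' ρ' (ι d) = key eq σ ρ d := by
  by_cases h : ρ d = d
  · rw [key_fix heq _ _ _ h, key_fix heq' _ _ _ (by rw [← hr, h]),
      ← peel_nat heq σ ρ heq' ι hi hs hr]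
    simp
  · rw [key_nfix heq _ _ _ h, key_nfix heq' _ _ _ (by rw [← hr]; exact fun h' => h (hi h')),
      ← peel_nat heq σ ρ heq' ι hi hs hr]
    simp [hr]

end

theorem nbeq (x y : ℕ) : Nat.beq x y = true ↔ x = y := Nat.beq_eq ▸ Iff.rfl

theorem lePeel_eq (q : Bool) (s r f : ℕ) (st : List (List ℕ)) (w : List ℕ) :
    lePeel q s r f st w = if q = true then decide (w ≤ peel Nat.beq (getD32 s) (getD32 r) f st)
      else decide (w = peel Nat.beq (getD32 s) (getD32 r) f st) := by
  induction f generalizing st w with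
  | zero =>
    change w.isEmpty = _
    rw [peel_zero]
    cases w <;> cases q <;> simp
  | succ f ih =>
    rcases st with _ | ⟨_ | ⟨a, c⟩, st⟩
    · change w.isEmpty = _
      rw [peel_nil]
      cases w <;> cases q <;> simp
    · change lePeel q s r f st w = _
      rw [ih, peel_nil_cons]
    · rw [peel_cons]
      cases w with
      | nil =>
        change q = _
        cases q
        · simp only [Bool.false_eq_true, if_false]
          rw [stepK_map (fun l => decide ([] = l))]
          simp only [reduceCtorEq, decide_false]
          rw [← stepK_map (β := Unit) (fun _ => false) _ _ _ _ _ _ (fun _ _ => ())]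
        · simp [ccn]
      | cons x w =>
        change stepK Nat.beq (getD32 r) a (getD32 s a) c st (fun s' st => bc (Nat.beq x s')
          (lePeel q s r f st w) (bc q (Nat.ble x s') false)) = _
        rw [stepK_map (fun l => if q = true then decide (x :: w ≤ l) else decide (x :: w = l))]
        congr 1
        funext s' st
        rw [ih, bc_eq, bc_eq]
        simp only [nbeq]
        by_cases hx : x = s'
        · subst hx
          cases q <;> simp [ccl]
        · cases q
          · simp [hx]
          · simp only [hx, if_false, if_true, ccl, false_and, or_false]
            rw [Bool.eq_iff_iff, Nat.ble_eq, decide_eq_true_iff]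
            omega

theorem leKey_eq (q : Bool) (s r d : ℕ) (w : List ℕ) :
    leKey q s r d w = if q = true then decide (w ≤ key Nat.beq (getD32 s) (getD32 r) d)
      else decide (w = key Nat.beq (getD32 s) (getD32 r) d) := by
  have hk : ∃ y l, key Nat.beq (getD32 s) (getD32 r) d = y :: l := by
    by_cases h : getD32 r d = d
    · rw [key_fix nbeq _ _ _ h]; exact ⟨_, _, rfl⟩
    · rw [key_nfix nbeq _ _ _ h]; exact ⟨_, _, rfl⟩
  cases w with
  | nil =>
    change q = _
    obtain ⟨y, l, h⟩ := hk
    rw [h]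
    cases q <;> simp [ccn]
  | cons x w =>
    change bc (Nat.beq (getD32 r d) d) (bc (Nat.beq x 0) (lePeel q s r 60 [[d]] w) false)
      (bc (Nat.beq x 1) (lePeel q s r 60 [[d, getD32 r d, getD32 r (getD32 r d)]] w)
      (bc q (Nat.ble x 1) false)) = _
    simp only [bc_eq, nbeq, lePeel_eq]
    by_cases h : getD32 r d = d
    · rw [key_fix nbeq _ _ _ h, if_pos h]
      by_cases hx : x = 0
      · subst hx
        cases q <;> simp [ccl]
      · cases q <;> simp [hx, ccl]
    · rw [key_nfix nbeq _ _ _ h, if_neg h]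
      by_cases hx : x = 1
      · subst hx
        cases q <;> simp [ccl]
      · cases q
        · simp [hx]
        · simp only [hx, if_false, if_true, ccl, false_and, or_false]
          rw [Bool.eq_iff_iff, Nat.ble_eq, decide_eq_true_iff]
          omega

theorem allLT_eq (n : ℕ) (p : ℕ → Bool) : allLT n p = true ↔ ∀ i < n, p i = true := by
  induction n with
  | zero => simp [allLT]
  | succ n ih =>
    change bc (p n) (allLT n p) false = true ↔ _
    rw [bc_eq, Nat.forall_lt_succ_right]
    split_ifs with h
    · rw [ih]; simp [h]
    · simp [h]

theorem cntLT_eq (n : ℕ) (p : ℕ → Bool) :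
    cntLT n p = ((Finset.range n).filter fun i => p i = true).card := by
  induction n with
  | zero => simp [cntLT]
  | succ n ih =>
    change bc (p n) (Nat.succ (cntLT n p)) (cntLT n p) = _
    rw [bc_eq, Finset.range_add_one, Finset.filter_insert, ih]
    split_ifs with h
    · rw [Finset.card_insert_of_notMem (by simp)]
    · rfl

/-- the word `w` is a lower bound for all keys of the table -/
def CanonT (n s r : ℕ) (w : List ℕ) : Prop :=
  ∀ d < n, w ≤ key Nat.beq (getD32 s) (getD32 r) d

theorem leafVal_eq (n s r : ℕ) (w : List ℕ) :
    (leafVal n s r w = 0 ∧ ¬ CanonT n s r w) ∨ (CanonT n s r w ∧ (leafVal n s r w = 10000 ∨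
      (leafVal n s r w = 1 ∧ validB n (getD32 s) (getD32 r) = true ∧
        w = key Nat.beq (getD32 s) (getD32 r) 0))) := by
  have h1 : allLT n (fun d => leKey true s r d w) = true ↔ CanonT n s r w := by
    rw [allLT_eq]
    simp only [leKey_eq, if_true, decide_eq_true_iff]
    rfl
  by_cases h : CanonT n s r w
  · right
    refine ⟨h, ?_⟩
    rw [leafVal]
    simp only [bc_eq]
    rw [if_pos (h1.2 h)]
    split_ifs with h2 h3
    · right
      rw [leKey_eq] at h3
      exact ⟨rfl, h2, by simpa using h3⟩
    · simp
    · simp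
  · left
    refine ⟨?_, h⟩
    rw [leafVal]
    simp only [bc_eq]
    rw [if_neg (by rwa [h1])]

end K3MM

namespace K3MM

/-! ### invariants of the peeling process -/

/-- `L` lists a full cycle of `φ`, in order -/
def Cyc {D : Type} (φ : D → D) : List D → Prop
  | [] => True
  | a :: B => List.IsChain (fun u v => φ u = v) (a :: (B ++ [a]))

theorem chain_head {D : Type} {φ φ' : D → D} {a b z : D} {X : List D}
    (h : List.IsChain (fun u v => φ u = v) (a :: (X ++ [z]))) (hb : φ' b = φ a)
    (hX : ∀ x ∈ X, φ' x = φ x) : List.IsChain (fun u v => φ' u = v) (b :: (X ++ [z])) := by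
  induction X generalizing a b with
  | nil =>
    simp only [List.nil_append, List.isChain_cons_cons, List.isChain_singleton, and_true] at h ⊢
    rw [hb, h]
  | cons x X ih =>
    simp only [List.cons_append, List.isChain_cons_cons] at h ⊢
    refine ⟨hb.trans h.1, ih h.2 (hX x List.mem_cons_self) fun y hy => hX y ?_⟩
    exact List.mem_cons_of_mem _ hy

theorem Cyc.congr {D : Type} {φ φ' : D → D} {L : List D} (h : Cyc φ L)
    (hX : ∀ x ∈ L, φ' x = φ x) : Cyc φ' L := by
  cases L with
  | nil => trivial
  | cons a B =>
    refine chain_head h (hX a List.mem_cons_self) ?_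
    exact fun x hx => hX x (List.mem_cons_of_mem _ hx)

theorem Cyc.rot {D : Type} {φ : D → D} {A C : List D} {a : D} (h : Cyc φ (A ++ a :: C)) :
    Cyc φ (a :: (C ++ A)) := by
  cases A with
  | nil => simpa using h
  | cons x A =>
    simp only [List.cons_append, Cyc, List.append_assoc] at h
    have h' : List.IsChain (fun u v => φ u = v) ((x :: A) ++ a :: (C ++ [x])) := by simpa using h
    rw [List.isChain_split] at h'
    change List.IsChain _ _
    have : a :: (C ++ x :: A ++ [a]) = (a :: C) ++ x :: (A ++ [a]) := by simp
    rw [this, List.isChain_split]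
    exact ⟨h'.2, h'.1⟩

theorem Cyc.mem {D : Type} {φ : D → D} {L : List D} (h : Cyc φ L) {x : D} (hx : x ∈ L) :
    φ x ∈ L := by
  obtain ⟨A, C, rfl⟩ := List.append_of_mem hx
  have h := h.rot
  have : φ x ∈ (x :: (C ++ A)) := by
    change List.IsChain _ _ at h
    generalize C ++ A = E at h
    cases E with
    | nil =>
      simp at h
      simp [h]
    | cons y E =>
      simp only [List.cons_append, List.isChain_cons_cons] at h
      simp [h.1]
  simp at this ⊢
  tauto

/-- the open darts of a boundary -/
def opn {D : Type} [DecidableEq D] (ps : Finset D) (L : List D) : List D :=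
  L.filter fun x => decide (x ∉ ps)

theorem opn_insert {D : Type} [DecidableEq D] (ps : Finset D) (L : List D) {a : D} (h : a ∉ L) :
    opn (insert a ps) L = opn ps L := by
  unfold opn
  refine List.filter_congr fun x hx => ?_
  have : x ≠ a := by rintro rfl; exact h hx
  simp [this]

theorem opn_append {D : Type} [DecidableEq D] (ps : Finset D) (L M : List D) :
    opn ps (L ++ M) = opn ps L ++ opn ps M := by simp [opn]

theorem opn_cons_mem {D : Type} [DecidableEq D] (ps : Finset D) (L : List D) {a : D}
    (h : a ∈ ps) : opn ps (a :: L) = opn ps L := by simp [opn, h]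

theorem opn_cons_not_mem {D : Type} [DecidableEq D] (ps : Finset D) (L : List D) {a : D}
    (h : a ∉ ps) : opn ps (a :: L) = a :: opn ps L := by simp [opn, h]

theorem mem_opn {D : Type} [DecidableEq D] {ps : Finset D} {L : List D} {a : D} :
    a ∈ opn ps L ↔ a ∈ L ∧ a ∉ ps := by simp [opn]

/-- state of the peeling process: explored darts `vs`, processed darts `ps`, partial involution
`τ`, boundaries `Ls` -/
structure Inv {D : Type} [DecidableEq D] (ρ σ : Equiv.Perm D) (d : D) (τ : Equiv.Perm D)
    (vs : List D) (ps : Finset D) (Ls : List (List D)) : Prop where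
  dmem : d ∈ vs
  nd : vs.Nodup
  rcl : ∀ x ∈ vs, ρ x ∈ vs
  pv : ∀ x ∈ ps, x ∈ vs
  pcl : ∀ x ∈ ps, σ x ∈ ps
  t1 : ∀ x ∈ ps, τ x = σ x
  t2 : ∀ x, x ∉ ps → τ x = x
  conn : ∀ x ∈ vs, comp ρ τ d x
  cyc : ∀ L ∈ Ls, Cyc (fun x => ρ (τ x)) L
  lnd : Ls.flatten.Nodup
  lsub : ∀ x ∈ Ls.flatten, x ∈ vs
  cov : ∀ x ∈ vs, x ∉ ps → x ∈ Ls.flatten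

section
variable {D : Type} [DecidableEq D] {ρ σ : Equiv.Perm D} {d : D} {τ : Equiv.Perm D}
    {vs : List D} {ps : Finset D} {R : List (List D)}

theorem Inv.rot {L : List D} {a : D} {c : List D} (I : Inv ρ σ d τ vs ps (L :: R))
    (h : opn ps L = a :: c) :
    ∃ B, Inv ρ σ d τ vs ps ((a :: B) :: R) ∧ opn ps B = c ∧ a ∉ ps := by
  unfold opn at h
  rw [List.filter_eq_cons_iff] at h
  obtain ⟨A, C, rfl, hA, ha, hC⟩ := h
  have hperm : ((a :: (C ++ A)) :: R).flatten.Perm ((A ++ a :: C) :: R).flatten := by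
    simp only [List.flatten_cons]
    refine List.Perm.append_right _ ?_
    exact (List.perm_append_comm (l₁ := a :: C) (l₂ := A))
  refine ⟨C ++ A, ?_, ?_, by simpa using ha⟩
  · refine { I with cyc := ?_, lnd := ?_, lsub := ?_, cov := ?_ }
    · intro L hL
      rcases List.mem_cons.1 hL with rfl | hL
      · exact (I.cyc _ List.mem_cons_self).rot
      · exact I.cyc _ (List.mem_cons_of_mem _ hL)
    · exact hperm.nodup_iff.2 I.lnd
    · intro x hx
      exact I.lsub x (hperm.mem_iff.1 hx)
    · intro x hx h
      exact hperm.mem_iff.2 (I.cov x hx h)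
  · unfold opn
    rw [List.filter_append, hC]
    have : List.filter (fun x => decide (x ∉ ps)) A = [] := by
      rw [List.filter_eq_nil_iff]
      exact hA
    rw [this, List.append_nil]

theorem Inv.drop {L : List D} (I : Inv ρ σ d τ vs ps (L :: R)) (h : opn ps L = []) :
    Inv ρ σ d τ vs ps R := by
  refine { I with cyc := ?_, lnd := ?_, lsub := ?_, cov := ?_ }
  · intro L hL
    exact I.cyc _ (List.mem_cons_of_mem _ hL)
  · have := I.lnd
    rw [List.flatten_cons, List.nodup_append] at this
    exact this.2.1
  · intro x hx
    exact I.lsub x (by rw [List.flatten_cons]; exact List.mem_append_right _ hx)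
  · intro x hx hp
    have := I.cov x hx hp
    rw [List.flatten_cons, List.mem_append] at this
    rcases this with h1 | h1
    · have : x ∈ opn ps L := mem_opn.2 ⟨h1, hp⟩
      simp [h] at this
    · exact h1

theorem Inv.half {a : D} {Ls : List (List D)} (I : Inv ρ σ d τ vs ps Ls) (hv : a ∈ vs)
    (hn : a ∉ ps) (h : σ a = a) : Inv ρ σ d τ vs (insert a ps) Ls := by
  refine { I with pv := ?_, pcl := ?_, t1 := ?_, t2 := ?_, cov := ?_ }
  · intro x hx
    rcases Finset.mem_insert.1 hx with rfl | hx
    · exact hv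
    · exact I.pv x hx
  · intro x hx
    rcases Finset.mem_insert.1 hx with rfl | hx
    · rw [h]; exact Finset.mem_insert_self _ _
    · exact Finset.mem_insert_of_mem (I.pcl x hx)
  · intro x hx
    rcases Finset.mem_insert.1 hx with rfl | hx
    · rw [h, I.t2 _ hn]
    · exact I.t1 x hx
  · intro x hx
    exact I.t2 x fun h => hx (Finset.mem_insert_of_mem h)
  · intro x hx hp
    exact I.cov x hx fun h => hp (Finset.mem_insert_of_mem h)

variable [Finite D]

theorem comp_mono_swap {a b : D} (ha : τ a = a) (hb : τ b = b) :
    comp ρ τ ≤ comp ρ (τ * Equiv.swap a b) := by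
  refine sup_le le_sup_left (sc_le fun x => ?_)
  by_cases hxa : x = a
  · subst hxa; rw [ha]
  by_cases hxb : x = b
  · subst hxb; rw [hb]
  have : τ x = (τ * Equiv.swap a b) x := by
    rw [Equiv.Perm.mul_apply, Equiv.swap_apply_of_ne_of_ne hxa hxb]
  rw [this]
  exact (le_sup_right : _ ≤ comp ρ (τ * Equiv.swap a b)) (sc_step _ x)

theorem comp_swap {a b : D} (hb : τ b = b) : comp ρ (τ * Equiv.swap a b) a b := by
  have : (τ * Equiv.swap a b) a = b := by
    rw [Equiv.Perm.mul_apply, Equiv.swap_apply_left, hb]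
  have h := (le_sup_right : _ ≤ comp ρ (τ * Equiv.swap a b)) (sc_step (τ * Equiv.swap a b) a)
  rwa [this] at h

theorem Inv.tables {a b : D} {Ls : List (List D)} (hσ : ∀ x, σ (σ x) = x)
    (I : Inv ρ σ d τ vs ps Ls) (ha : a ∉ ps) (hb : b ∉ ps) (h : σ a = b) :
    (∀ x ∈ insert a (insert b ps), σ x ∈ insert a (insert b ps)) ∧
    (∀ x ∈ insert a (insert b ps), (τ * Equiv.swap a b) x = σ x) ∧
    (∀ x ∉ insert a (insert b ps), (τ * Equiv.swap a b) x = x) := by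
  have h' : σ b = a := by rw [← h, hσ]
  refine ⟨?_, ?_, ?_⟩
  · intro x hx
    simp only [Finset.mem_insert] at hx ⊢
    rcases hx with rfl | rfl | hx
    · exact Or.inr (Or.inl h)
    · exact Or.inl h'
    · exact Or.inr (Or.inr (I.pcl x hx))
  · intro x hx
    simp only [Finset.mem_insert] at hx
    rw [Equiv.Perm.mul_apply]
    by_cases hxa : x = a
    · subst hxa
      rw [Equiv.swap_apply_left, I.t2 _ hb, h]
    by_cases hxb : x = b
    · subst hxb
      rw [Equiv.swap_apply_right, I.t2 _ ha, h']
    rw [Equiv.swap_apply_of_ne_of_ne hxa hxb]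
    exact I.t1 x (by tauto)
  · intro x hx
    simp only [Finset.mem_insert, not_or] at hx
    rw [Equiv.Perm.mul_apply, Equiv.swap_apply_of_ne_of_ne hx.1 hx.2.1]
    exact I.t2 x hx.2.2

theorem Inv.splice {a b : D} {X Y : List D} (hσ : ∀ x, σ (σ x) = x)
    (I : Inv ρ σ d τ vs ps ((a :: (X ++ b :: Y)) :: R)) (ha : a ∉ ps) (hb : b ∉ ps)
    (h : σ a = b) :
    Inv ρ σ d (τ * Equiv.swap a b) vs (insert a (insert b ps)) ((b :: X) :: (a :: Y) :: R) := by
  obtain ⟨p1, p2, p3⟩ := I.tables hσ ha hb h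
  have hperm : ((b :: X) :: (a :: Y) :: R).flatten.Perm ((a :: (X ++ b :: Y)) :: R).flatten := by
    simp only [List.flatten_cons, ← List.append_assoc]
    refine List.Perm.append_right _ ?_
    have : (b :: X ++ a :: Y).Perm (a :: Y ++ b :: X) := List.perm_append_comm
    refine this.trans ?_
    simp only [List.cons_append]
    refine List.Perm.cons _ ?_
    refine List.perm_append_comm.trans ?_
    simp only [List.cons_append]
    exact List.perm_middle.symm
  have hnd := I.lnd
  rw [← hperm.nodup_iff] at hnd
  simp only [List.flatten_cons, List.nodup_append, List.nodup_cons, List.mem_append,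
    List.mem_cons] at hnd
  have hφ : ∀ x, x ≠ a → x ≠ b → ρ ((τ * Equiv.swap a b) x) = ρ (τ x) := by
    intro x h1 h2
    rw [Equiv.Perm.mul_apply, Equiv.swap_apply_of_ne_of_ne h1 h2]
  have hc := I.cyc _ List.mem_cons_self
  have hc' : List.IsChain (fun u v => ρ (τ u) = v) ((a :: X) ++ b :: (Y ++ [a])) := by
    simpa [Cyc] using hc
  rw [List.isChain_split] at hc'
  refine ⟨I.dmem, I.nd, I.rcl, ?_, p1, p2, p3, ?_, ?_, hperm.nodup_iff.2 I.lnd, ?_, ?_⟩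
  · intro x hx
    simp only [Finset.mem_insert] at hx
    rcases hx with rfl | rfl | hx
    · exact I.lsub _ (by simp)
    · exact I.lsub _ (by simp)
    · exact I.pv x hx
  · intro x hx
    exact comp_mono_swap (I.t2 _ ha) (I.t2 _ hb) (I.conn x hx)
  · intro L hL
    simp only [List.mem_cons] at hL
    rcases hL with rfl | rfl | hL
    · refine chain_head hc'.1 ?_ ?_
      · rw [Equiv.Perm.mul_apply, Equiv.swap_apply_right]
      · intro x hx
        refine hφ x ?_ ?_
        · rintro rfl
          exact hnd.2.2 x (Or.inr hx) x (Or.inl (Or.inl rfl)) rfl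
        · rintro rfl
          exact hnd.1.1 hx
    · refine chain_head hc'.2 ?_ ?_
      · rw [Equiv.Perm.mul_apply, Equiv.swap_apply_left]
      · intro x hx
        refine hφ x ?_ ?_
        · rintro rfl
          exact hnd.2.1.1.1 hx
        · rintro rfl
          exact hnd.2.2 x (Or.inl rfl) x (Or.inl (Or.inr hx)) rfl
    · refine (I.cyc L (List.mem_cons_of_mem _ hL)).congr fun x hx => hφ x ?_ ?_
      · rintro rfl
        exact hnd.2.1.2.2 x (Or.inl rfl) x (List.mem_flatten.2 ⟨L, hL, hx⟩) rfl
      · rintro rfl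
        exact hnd.2.2 x (Or.inl rfl) x (Or.inr (List.mem_flatten.2 ⟨L, hL, hx⟩)) rfl
  · intro x hx
    exact I.lsub x (hperm.mem_iff.1 hx)
  · intro x hx hp
    simp only [Finset.mem_insert, not_or] at hp
    exact hperm.mem_iff.2 (I.cov x hx hp.2.2)

theorem Inv.new {a b : D} {B N : List D} (hσ : ∀ x, σ (σ x) = x)
    (I : Inv ρ σ d τ vs ps ((a :: B) :: R)) (ha : a ∉ ps) (h : σ a = b)
    (hN : ∀ x ∈ b :: N, x ∉ vs) (hNn : (b :: N).Nodup) (hNr : ∀ x ∈ b :: N, ρ x ∈ b :: N)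
    (hNc : Cyc ρ (b :: N)) (hNs : ∀ x ∈ b :: N, sc ρ b x) :
    Inv ρ σ d (τ * Equiv.swap a b) (vs ++ b :: N) (insert a (insert b ps))
      ((a :: (N ++ b :: B)) :: R) := by
  have hbv : b ∉ vs := hN b List.mem_cons_self
  have hav : a ∈ vs := I.lsub a (by simp)
  have hab : a ≠ b := by rintro rfl; exact hbv hav
  have hb : b ∉ ps := fun h => hbv (I.pv b h)
  obtain ⟨p1, p2, p3⟩ := I.tables hσ ha hb h
  have hperm : ((a :: (N ++ b :: B)) :: R).flatten.Perm
      ((b :: N) ++ ((a :: B) :: R).flatten) := by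
    simp only [List.flatten_cons, List.append_assoc, List.cons_append]
    have h1 : (a :: (N ++ b :: (B ++ R.flatten))).Perm (a :: b :: (N ++ (B ++ R.flatten))) :=
      List.Perm.cons _ List.perm_middle
    refine h1.trans ((List.Perm.swap _ _ _).trans (List.Perm.cons _ ?_))
    exact List.perm_middle.symm
  have hnd := I.lnd
  simp only [List.flatten_cons, List.nodup_append, List.nodup_cons, List.mem_append,
    List.mem_cons] at hnd
  have hφ : ∀ x, x ≠ a → x ≠ b → ρ ((τ * Equiv.swap a b) x) = ρ (τ x) := by
    intro x h1 h2
    rw [Equiv.Perm.mul_apply, Equiv.swap_apply_of_ne_of_ne h1 h2]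
  have hc : List.IsChain (fun u v => ρ (τ u) = v) (a :: (B ++ [a])) :=
    I.cyc _ List.mem_cons_self
  have hNc' : List.IsChain (fun u v => ρ u = v) (b :: (N ++ [b])) := hNc
  have hconn := comp_mono_swap (ρ := ρ) (I.t2 _ ha) (I.t2 _ hb)
  refine ⟨by simp [I.dmem], ?_, ?_, ?_, p1, p2, p3, ?_, ?_, ?_, ?_, ?_⟩
  · rw [List.nodup_append]
    refine ⟨I.nd, hNn, ?_⟩
    rintro x hx y hy rfl
    exact hN x hy hx
  · intro x hx
    rw [List.mem_append] at hx ⊢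
    exact hx.imp (I.rcl x) (hNr x)
  · intro x hx
    simp only [Finset.mem_insert] at hx
    rw [List.mem_append]
    rcases hx with rfl | rfl | hx
    · exact Or.inl hav
    · exact Or.inr List.mem_cons_self
    · exact Or.inl (I.pv x hx)
  · intro x hx
    rw [List.mem_append] at hx
    rcases hx with hx | hx
    · exact hconn (I.conn x hx)
    · exact Setoid.trans' _ (hconn (I.conn a hav)) (Setoid.trans' _ (comp_swap (I.t2 _ hb))
        ((le_sup_left : sc ρ ≤ comp ρ _) (hNs x hx)))
  · intro L hL
    simp only [List.mem_cons] at hL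
    rcases hL with rfl | hL
    · change List.IsChain _ _
      have : a :: (N ++ b :: B ++ [a]) = (a :: N) ++ b :: (B ++ [a]) := by simp
      rw [this, List.isChain_split]
      constructor
      · refine chain_head hNc' ?_ ?_
        · rw [Equiv.Perm.mul_apply, Equiv.swap_apply_left, I.t2 _ hb]
        · intro x hx
          have hxv : x ∉ vs := hN x (List.mem_cons_of_mem _ hx)
          rw [hφ x, I.t2 x fun h => hxv (I.pv x h)]
          · rintro rfl
            exact hxv hav
          · rintro rfl
            exact (List.nodup_cons.1 hNn).1 hx
      · refine chain_head hc ?_ ?_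
        · rw [Equiv.Perm.mul_apply, Equiv.swap_apply_right]
        · intro x hx
          refine hφ x ?_ ?_
          · rintro rfl
            exact hnd.1.1 hx
          · rintro rfl
            exact hbv (I.lsub x (by simp [hx]))
    · refine (I.cyc L (List.mem_cons_of_mem _ hL)).congr fun x hx => hφ x ?_ ?_
      · rintro rfl
        exact hnd.2.2 x (Or.inl rfl) x (List.mem_flatten.2 ⟨L, hL, hx⟩) rfl
      · rintro rfl
        refine hbv (I.lsub x ?_)
        rw [List.flatten_cons]
        exact List.mem_append_right _ (List.mem_flatten.2 ⟨L, hL, hx⟩)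
  · rw [hperm.nodup_iff, List.nodup_append]
    refine ⟨hNn, I.lnd, ?_⟩
    rintro x hx y hy rfl
    exact hN x hx (I.lsub x hy)
  · intro x hx
    rw [hperm.mem_iff, List.mem_append] at hx
    rw [List.mem_append]
    exact hx.symm.imp_left (I.lsub x)
  · intro x hx hp
    simp only [Finset.mem_insert, not_or] at hp
    rw [hperm.mem_iff, List.mem_append]
    rw [List.mem_append] at hx
    exact hx.symm.imp_right fun hx => I.cov x hx hp.2.2

end

theorem Inv.planar {D : Type} [DecidableEq D] [Fintype D] {ρ σ : Equiv.Perm D} {d : D}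
    {τ : Equiv.Perm D} {vs : List D} {ps : Finset D} {R : List (List D)} {a : D} {B : List D}
    (hσ : ∀ x, σ (σ x) = x) (hP : Psi ρ σ ≤ Psi ρ 1)
    (I : Inv ρ σ d τ vs ps ((a :: B) :: R)) (ha : a ∉ ps) (h : σ a ≠ a) (hv : σ a ∈ vs) :
    σ a ∈ B ∧ σ a ∉ ps := by
  have hav : a ∈ vs := I.lsub a (by simp)
  have hp : σ a ∉ ps := fun hp => ha (by have := I.pcl _ hp; rwa [hσ] at this)
  refine ⟨?_, hp⟩
  have hsub : SubInv τ σ := by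
    intro x
    by_cases hx : x ∈ ps
    · exact Or.inr (I.t1 x hx)
    · exact Or.inl (I.t2 x hx)
  have hs := planar_lemma hσ hP hsub (I.t2 a ha) h
    (Setoid.trans' _ (Setoid.symm' _ (I.conn a hav)) (I.conn _ hv))
  obtain ⟨k, -, hk⟩ := hs.exists_pow_eq'
  have hc := I.cyc _ List.mem_cons_self
  have : ∀ k : ℕ, ((ρ * τ) ^ k) a ∈ a :: B := by
    intro k
    induction k with
    | zero => simp
    | succ k ih =>
      rw [pow_succ', Equiv.Perm.mul_apply]
      exact hc.mem ih
  have := this k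
  rw [hk, List.mem_cons] at this
  exact this.resolve_left h

theorem Inv.all {D : Type} [DecidableEq D] [Fintype D] {ρ σ : Equiv.Perm D} {d : D}
    {τ : Equiv.Perm D} {vs : List D} {ps : Finset D}
    (hσ : ∀ x, σ (σ x) = x) (hρ : ∀ x, ρ (ρ (ρ x)) = x)
    (hconn : ∀ x, comp ρ σ d x) (I : Inv ρ σ d τ vs ps []) (x : D) : x ∈ vs ∧ x ∈ ps := by
  have hvp : ∀ x ∈ vs, x ∈ ps := by
    intro x hx
    by_contra hp
    simpa using I.cov x hx hp
  have h1 : comp ρ σ ≤ Setoid.ker (fun x => x ∈ vs) := by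
    refine sup_le (sc_le fun x => ?_) (sc_le fun x => ?_)
    · change (x ∈ vs) = (ρ x ∈ vs)
      refine propext ⟨I.rcl x, fun h => ?_⟩
      have := I.rcl _ (I.rcl _ h)
      rwa [hρ] at this
    · change (x ∈ vs) = (σ x ∈ vs)
      refine propext ⟨fun h => I.pv _ (I.pcl _ (hvp _ h)), fun h => ?_⟩
      have := I.pv _ (I.pcl _ (hvp _ h))
      rwa [hσ] at this
  have h2 : (d ∈ vs) = (x ∈ vs) := h1 (hconn x)
  have h3 : x ∈ vs := h2 ▸ I.dmem
  exact ⟨h3, hvp x h3⟩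

end K3MM

namespace K3MM

/-! ### completeness of the search tree -/

/-- decidable equality as a boolean function -/
def eqD {D : Type} [DecidableEq D] (x y : D) : Bool := decide (x = y)

theorem eqD_iff {D : Type} [DecidableEq D] (x y : D) : eqD x y = true ↔ x = y := by simp [eqD]

/-- the weight of a partially explored surface -/
def wt {D : Type} [DecidableEq D] (ρ σ : Equiv.Perm D) (vs : List D) (ps : Finset D) : ℕ :=
  vs.length + 2 * vs.countP (fun x => decide (ρ x = x)) +
    3 * (ps.filter fun x => σ x = x).card

theorem wt_le {D : Type} [DecidableEq D] [Fintype D] (ρ σ : Equiv.Perm D) (vs : List D)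
    (ps : Finset D) (h : vs.Nodup) : wt ρ σ vs ps ≤ Fintype.card D +
      2 * (Finset.univ.filter fun x => ρ x = x).card +
      3 * (Finset.univ.filter fun x => σ x = x).card := by
  have h1 : vs.length ≤ Fintype.card D := h.length_le_card
  have h2 : vs.countP (fun x => decide (ρ x = x)) ≤
      (Finset.univ.filter fun x => ρ x = x).card := by
    rw [List.countP_eq_length_filter, ← List.toFinset_card_of_nodup (h.filter _)]
    refine Finset.card_le_card fun x hx => ?_
    simp at hx
    simp [hx.2]
  have h3 : (ps.filter fun x => σ x = x).card ≤ (Finset.univ.filter fun x => σ x = x).card :=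
    Finset.card_le_card (Finset.filter_subset_filter _ (Finset.subset_univ _))
  unfold wt
  omega

theorem s_table {D : Type} [DecidableEq D] {σ : D → D} {vs : List D} {ps : Finset D} {s : ℕ}
    {a b : D} (hl : vs.length ≤ 32) (ha : a ∈ vs) (hb : b ∈ vs) (h1 : σ a = b)
    (h2 : σ b = a) (hpv : ∀ x ∈ ps, x ∈ vs)
    (hs : ∀ x ∈ ps, getD32 s (vs.idxOf x) = vs.idxOf (σ x)) :
    ∀ x ∈ insert a (insert b ps),
      getD32 (setD32 (setD32 s (vs.idxOf a) (vs.idxOf b)) (vs.idxOf b) (vs.idxOf a))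
        (vs.idxOf x) = vs.idxOf (σ x) := by
  have hia := List.idxOf_lt_length_of_mem ha
  have hib := List.idxOf_lt_length_of_mem hb
  intro x hx
  have hxv : x ∈ vs := by
    simp only [Finset.mem_insert] at hx
    rcases hx with rfl | rfl | hx
    · exact ha
    · exact hb
    · exact hpv x hx
  rw [getD32_setD32 _ _ _ _ (by omega), getD32_setD32 _ _ _ _ (by omega)]
  simp only [List.idxOf_inj hxv]
  split_ifs with h3 h4
  · rw [h3, h2]
  · rw [h4, h1]
  · refine hs x ?_
    simp only [Finset.mem_insert] at hx
    tauto

/-- `D` with base point `d` is given by a table -/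
def IsTab {D : Type} (σ ρ : D → D) (d : D) (n s r : ℕ) : Prop :=
  ∃ ι : D → ℕ, Function.Injective ι ∧ (∀ x, ι x < n) ∧ (∀ i < n, ∃ x, ι x = i) ∧ ι d = 0 ∧
    (∀ x, ι (σ x) = getD32 s (ι x)) ∧ (∀ x, ι (ρ x) = getD32 r (ι x))

theorem complete {D : Type} [DecidableEq D] [Fintype D] {ρ σ : Equiv.Perm D} {d : D}
    (hσ : ∀ x, σ (σ x) = x) (hρ : ∀ x, ρ (ρ (ρ x)) = x) (hP : Psi ρ σ ≤ Psi ρ 1)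
    (hconn : ∀ x, comp ρ σ d x)
    (hN : Fintype.card D + 2 * (Finset.univ.filter fun x => ρ x = x).card +
      3 * (Finset.univ.filter fun x => σ x = x).card ≤ 24)
    (pU pH : Bool) (hU : ∀ x, ρ x = x → pU = true) (hH : ∀ x, σ x = x → pH = true)
    (f f' b : ℕ) (vs : List D) (ps : Finset D) (τ : Equiv.Perm D) (Ls : List (List D))
    (s r : ℕ) (w : List ℕ) (I : Inv ρ σ d τ vs ps Ls)
    (hb : wt ρ σ vs ps + 3 * b = 24)
    (hf : 2 * (Fintype.card D - ps.card) + Ls.length < f)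
    (hf' : 2 * (Fintype.card D - ps.card) + Ls.length < f')
    (hr : ∀ x ∈ vs, getD32 r (vs.idxOf x) = vs.idxOf (ρ x))
    (hs : ∀ x ∈ ps, getD32 s (vs.idxOf x) = vs.idxOf (σ x))
    (hd : vs.idxOf d = 0) :
    ∃ l ∈ leaves pU pH f b ((Ls.map (opn ps)).map (List.map fun x => vs.idxOf x))
      vs.length s r w, l.2.2.2.reverse = w.reverse ++ peel eqD σ ρ f' (Ls.map (opn ps)) ∧
      IsTab σ ρ d l.1 l.2.1 l.2.2.1 := by
  induction f generalizing f' b vs ps τ Ls s r w with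
  | zero => omega
  | succ f ih =>
  obtain ⟨f', rfl⟩ : ∃ k, f' = k + 1 := ⟨f' - 1, by omega⟩
  have hlen : vs.length ≤ 24 := by unfold wt at hb; omega
  have hidx : ∀ x ∈ vs, vs.idxOf x < vs.length := fun x hx => List.idxOf_lt_length_of_mem hx
  rcases Ls with _ | ⟨L, R⟩
  · have hall := I.all hσ hρ hconn
    refine ⟨(vs.length, s, r, w), by simp [leaves], by simp [peel_nil],
      fun x => vs.idxOf x, ?_, fun x => hidx x (hall x).1, ?_, hd, ?_, ?_⟩
    · intro x y hxy
      exact (List.idxOf_inj (hall x).1).1 hxy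
    · intro i hi
      exact ⟨vs[i], I.nd.idxOf_getElem i hi⟩
    · intro x
      exact (hs x (hall x).2).symm
    · intro x
      exact (hr x (hall x).1).symm
  rcases ho : opn ps L with _ | ⟨a, c⟩
  · obtain ⟨l, hl, hl1, hl2⟩ := ih f' b vs ps τ R s r w (I.drop ho) hb
      (by simp at hf; omega) (by simp at hf'; omega) hr hs hd
    refine ⟨l, ?_, ?_, hl2⟩
    · simp only [List.map_cons, ho, List.map_nil, leaves]
      exact hl
    · simp only [List.map_cons, ho, peel_nil_cons]
      exact hl1
  obtain ⟨B, I, hB, ha⟩ := I.rot ho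
  simp only [List.map_cons, ho]
  clear ho
  rw [List.length_cons] at hf hf'
  have hav : a ∈ vs := I.lsub a (by simp)
  have hpscard : ps.card + 1 ≤ Fintype.card D := by
    have : (insert a ps).card ≤ Fintype.card D := Finset.card_le_univ _
    rwa [Finset.card_insert_of_notMem ha] at this
  have hnd := I.lnd
  simp only [List.flatten_cons, List.nodup_append, List.nodup_cons, List.mem_cons] at hnd
  have haR : ∀ L ∈ R, a ∉ L := fun L hL h =>
    hnd.2.2 a (Or.inl rfl) a (List.mem_flatten.2 ⟨L, hL, h⟩) rfl
  rw [leaves_cons]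
  by_cases h1 : σ a = a
  · -- half edge
    have I' := I.half hav ha h1
    have hwt : wt ρ σ vs (insert a ps) = wt ρ σ vs ps + 3 := by
      unfold wt
      rw [Finset.filter_insert, if_pos h1, Finset.card_insert_of_notMem (by simp [ha])]
      omega
    have := (wt_le ρ σ vs (insert a ps) I.nd).trans hN
    obtain ⟨b, rfl⟩ : ∃ k, b = k + 1 := ⟨b - 1, by omega⟩
    obtain ⟨l, hl, hl1, hl2⟩ := ih f' b vs (insert a ps) τ _ (setD32 s (vs.idxOf a) (vs.idxOf a)) r
      (0 :: w) I' (by omega) (by rw [Finset.card_insert_of_notMem ha]; simp; omega)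
      (by rw [Finset.card_insert_of_notMem ha]; simp; omega) hr (by
        intro x hx
        have hxv := I'.pv x hx
        rw [getD32_setD32 _ _ _ _ (by have := hidx a hav; omega)]
        simp only [List.idxOf_inj hxv]
        split_ifs with hxa
        · rw [hxa, h1]
        · exact hs x ((Finset.mem_insert.1 hx).resolve_left hxa)) hd
    have hst : ((a :: B) :: R).map (opn (insert a ps)) = c :: R.map (opn ps) := by
      rw [List.map_cons, opn_cons_mem _ _ (Finset.mem_insert_self _ _), opn_insert _ _ hnd.1.1,
        hB]
      congr 1
      exact List.map_congr_left fun L hL => opn_insert _ _ (haR L hL)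
    rw [hst] at hl hl1
    refine ⟨l, ?_, ?_, hl2⟩
    · rw [List.mem_append]
      left
      simp only [List.mem_append]
      left
      rw [if_pos (hH a h1)]
      exact hl
    · rw [hl1, peel_H eqD_iff _ _ _ _ _ _ h1]
      simp
  have hσb : σ (σ a) = a := hσ a
  by_cases h2 : σ a ∈ vs
  · -- closing an edge
    obtain ⟨hbB, hbp⟩ := I.planar hσ hP ha h1 h2
    have hbc : σ a ∈ opn ps B := mem_opn.2 ⟨hbB, hbp⟩
    obtain ⟨X, Y, rfl, hX⟩ := List.eq_append_cons_of_mem hbB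
    have I' := I.splice hσ ha hbp rfl
    have hnd' := I'.lnd
    simp only [List.flatten_cons, List.nodup_append, List.nodup_cons, List.mem_append,
      List.mem_cons] at hnd'
    have haX : a ∉ X := fun h => hnd.1.1 (by simp [h])
    have haY : a ∉ Y := fun h => hnd.1.1 (by simp [h])
    have hbY : σ a ∉ Y := fun h => hnd'.2.2 (σ a) (Or.inl rfl) _ (Or.inl (Or.inr h)) rfl
    have hbR : ∀ L ∈ R, σ a ∉ L := fun L hL h =>
      hnd'.2.2 (σ a) (Or.inl rfl) _ (Or.inr (List.mem_flatten.2 ⟨L, hL, h⟩)) rfl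
    have hcard : (insert a (insert (σ a) ps)).card = ps.card + 2 := by
      rw [Finset.card_insert_of_notMem, Finset.card_insert_of_notMem hbp]
      simp [ha, Ne.symm h1]
    have hle : (insert a (insert (σ a) ps)).card ≤ Fintype.card D := Finset.card_le_univ _
    have hwt : wt ρ σ vs (insert a (insert (σ a) ps)) = wt ρ σ vs ps := by
      unfold wt
      rw [Finset.filter_insert, if_neg h1, Finset.filter_insert, if_neg]
      rw [hσ]; exact fun h => h1 h.symm
    obtain ⟨l, hl, hl1, hl2⟩ := ih f' b vs _ _ _
      (setD32 (setD32 s (vs.idxOf a) (vs.idxOf (σ a))) (vs.idxOf (σ a)) (vs.idxOf a)) r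
      ((3 + (opn ps X).length) :: w) I' (by omega) (by simp; omega)
      (by simp; omega) hr (s_table (by omega) hav h2 rfl hσb I.pv hs) hd
    have hst : ((σ a :: X) :: (a :: Y) :: R).map (opn (insert a (insert (σ a) ps))) =
        opn ps X :: opn ps Y :: R.map (opn ps) := by
      rw [List.map_cons, List.map_cons, opn_cons_mem _ _ (by simp), opn_cons_mem _ _ (by simp),
        opn_insert _ _ haX, opn_insert _ _ haY, opn_insert _ _ hX, opn_insert _ _ hbY]
      congr 2
      exact List.map_congr_left fun L hL => by
        rw [opn_insert _ _ (haR L hL), opn_insert _ _ (hbR L hL)]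
    rw [hst] at hl hl1
    rw [opn_append, opn_cons_not_mem _ _ hbp] at hB
    subst hB
    refine ⟨l, ?_, ?_, hl2⟩
    · rw [List.mem_append]
      right
      rw [List.mem_flatMap]
      refine ⟨((opn ps X).length, (opn ps X).map (fun x => vs.idxOf x), vs.idxOf (σ a),
        (opn ps Y).map (fun x => vs.idxOf x)), ?_, hl⟩
      have := splits_mem ((opn ps X).map fun x => vs.idxOf x) (vs.idxOf (σ a))
        ((opn ps Y).map fun x => vs.idxOf x) 0 []
      simpa using this
    · rw [hl1, peel_M eqD_iff _ _ _ _ _ _ _ h1 (fun h => hX (mem_opn.1 h).1)]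
      simp
  · -- a new vertex
    have hbp : σ a ∉ ps := fun h => h2 (I.pv _ h)
    have hbc : σ a ∉ c := by
      rw [← hB]
      intro h
      exact h2 (I.lsub _ (by simp [(mem_opn.1 h).1]))
    have hbB : σ a ∉ B := fun h => h2 (I.lsub _ (by simp [h]))
    have hbR : ∀ L ∈ R, σ a ∉ L := fun L hL h => h2 (I.lsub _ (by
      rw [List.flatten_cons]
      exact List.mem_append_right _ (List.mem_flatten.2 ⟨L, hL, h⟩)))
    have hcard : (insert a (insert (σ a) ps)).card = ps.card + 2 := by
      rw [Finset.card_insert_of_notMem, Finset.card_insert_of_notMem hbp]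
      simp [ha, Ne.symm h1]
    have hle : (insert a (insert (σ a) ps)).card ≤ Fintype.card D := Finset.card_le_univ _
    have hflt : (insert a (insert (σ a) ps)).filter (fun x => σ x = x) =
        ps.filter (fun x => σ x = x) := by
      rw [Finset.filter_insert, if_neg h1, Finset.filter_insert, if_neg]
      rw [hσ]; exact fun h => h1 h.symm
    have hst : ∀ N : List D, (∀ x ∈ σ a :: N, x ∉ vs) → σ a ∉ N →
        ((a :: (N ++ σ a :: B)) :: R).map (opn (insert a (insert (σ a) ps))) =
        (N ++ c) :: R.map (opn ps) := by
      intro N hN hbN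
      have haN : a ∉ N := fun h => hN a (List.mem_cons_of_mem _ h) hav
      rw [List.map_cons, opn_cons_mem _ _ (by simp), opn_append, opn_cons_mem _ _ (by simp),
        opn_insert _ _ haN, opn_insert _ _ hnd.1.1, opn_insert _ _ hbN, opn_insert _ _ hbB, hB]
      refine congrArg₂ List.cons (congrArg (· ++ c) ?_) ?_
      · unfold opn
        rw [List.filter_eq_self]
        intro x hx
        have := hN x (List.mem_cons_of_mem _ hx)
        simp only [decide_eq_true_eq]
        exact fun h => this (I.pv x h)
      · exact List.map_congr_left fun L hL => by
          rw [opn_insert _ _ (haR L hL), opn_insert _ _ (hbR L hL)]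
    have hidx1 : ∀ M : List D, ∀ x ∈ vs, (vs ++ M).idxOf x = vs.idxOf x := fun M x hx =>
      List.idxOf_append_of_mem hx
    have hidx2 : ∀ M : List D, ∀ x, x ∉ vs → (vs ++ M).idxOf x = vs.length + M.idxOf x :=
      fun M x hx => by rw [List.idxOf_append_of_notMem hx, add_comm]
    have hstack : ∀ M : List D, ∀ L ∈ R.map (opn ps),
        L.map (fun x => (vs ++ M).idxOf x) = L.map (fun x => vs.idxOf x) := by
      intro M L hL
      refine List.map_congr_left fun x hx => hidx1 M x ?_
      obtain ⟨L', hL', rfl⟩ := List.mem_map.1 hL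
      refine I.lsub x ?_
      rw [List.flatten_cons]
      exact List.mem_append_right _ (List.mem_flatten.2 ⟨L', hL', (mem_opn.1 hx).1⟩)
    have hcmap : ∀ M : List D, c.map (fun x => (vs ++ M).idxOf x) =
        c.map (fun x => vs.idxOf x) := by
      intro M
      refine List.map_congr_left fun x hx => hidx1 M x ?_
      rw [← hB] at hx
      exact I.lsub x (by simp [(mem_opn.1 hx).1])
    have hs' : ∀ M : List D, (vs ++ σ a :: M).length ≤ 24 →
        ∀ x ∈ insert a (insert (σ a) ps),
        getD32 (setD32 (setD32 s (vs.idxOf a) vs.length) vs.length (vs.idxOf a))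
          ((vs ++ σ a :: M).idxOf x) = (vs ++ σ a :: M).idxOf (σ x) := by
      intro M hM
      have h3 : (vs ++ σ a :: M).idxOf a = vs.idxOf a := hidx1 _ a hav
      have h4 : (vs ++ σ a :: M).idxOf (σ a) = vs.length := by simp [hidx2 _ _ h2]
      have := s_table (σ := σ) (vs := vs ++ σ a :: M) (ps := ps) (s := s) (a := a) (b := σ a)
        (by omega) (by simp [hav]) (by simp) rfl hσb
        (fun x hx => List.mem_append_left _ (I.pv x hx)) (fun x hx => by
          rw [hidx1 _ x (I.pv x hx), hidx1 _ _ (I.pv _ (I.pcl x hx)), hs x hx])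
      rwa [h3, h4] at this
    have hd' : ∀ M, (vs ++ M).idxOf d = 0 := fun M => by rw [hidx1 M d I.dmem, hd]
    by_cases h3 : ρ (σ a) = σ a
    · have hNv : ∀ x ∈ [σ a], x ∉ vs := by simpa using h2
      have I' := I.new hσ ha rfl hNv (by simp) (by simp [h3]) (by simp [Cyc, h3])
        (fun x hx => by rw [List.mem_singleton.1 hx])
      have hwt : wt ρ σ (vs ++ [σ a]) (insert a (insert (σ a) ps)) = wt ρ σ vs ps + 3 := by
        unfold wt
        rw [hflt]
        simp [h3]
        omega
      have hw := (wt_le ρ σ (vs ++ [σ a]) (insert a (insert (σ a) ps)) I'.nd).trans hN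
      have hM : (vs ++ [σ a]).length ≤ 24 := by unfold wt at hw; omega
      have hM' : vs.length + 1 ≤ 24 := by simpa using hM
      obtain ⟨b, rfl⟩ : ∃ k, b = k + 1 := ⟨b - 1, by omega⟩
      obtain ⟨l, hl, hl1, hl2⟩ := ih f' b _ _ _ _ _ (setD32 r vs.length vs.length) (1 :: w) I'
        (by omega) (by simp; omega) (by simp; omega) (by
          intro x hx
          rw [List.mem_append, List.mem_singleton] at hx
          rw [getD32_setD32 _ _ _ _ (by omega)]
          by_cases hxv : x ∈ vs
          · have := hidx x hxv
            rw [hidx1 _ _ hxv, hidx1 _ _ (I.rcl x hxv), if_neg (by omega), hr x hxv]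
          · have hxe := hx.resolve_left hxv
            rw [hidx2 _ _ hxv, hxe, h3, hidx2 _ _ h2]
            simp) (hs' [] hM) (hd' _)
      rw [hst [] hNv (by simp)] at hl hl1
      refine ⟨l, ?_, ?_, hl2⟩
      · rw [List.mem_append]
        left
        simp only [List.mem_append]
        right; left
        rw [if_pos (hU _ h3)]
        simp only [List.nil_append, List.map_cons, hcmap, List.length_append, List.length_cons,
          List.length_nil] at hl
        rwa [List.map_congr_left (hstack _)] at hl
      · rw [hl1, peel_U eqD_iff _ _ _ _ _ _ h1 hbc h3]
        simp
    · have e1 : ρ (ρ (σ a)) ≠ σ a := by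
        intro h
        have := hρ (σ a)
        rw [h] at this
        exact h3 this
      have e2 : ρ (ρ (σ a)) ≠ ρ (σ a) := fun h => h3 (ρ.injective h)
      have e3 := hρ (σ a)
      have v1 : ρ (σ a) ∉ vs := fun h => h2 (by have := I.rcl _ (I.rcl _ h); rwa [e3] at this)
      have v2 : ρ (ρ (σ a)) ∉ vs := fun h => h2 (by have := I.rcl _ h; rwa [e3] at this)
      have hNv : ∀ x ∈ [σ a, ρ (σ a), ρ (ρ (σ a))], x ∉ vs := by
        intro x hx
        simp only [List.mem_cons, List.not_mem_nil, or_false] at hx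
        rcases hx with rfl | rfl | rfl
        · exact h2
        · exact v1
        · exact v2
      have I' := I.new (N := [ρ (σ a), ρ (ρ (σ a))]) hσ ha rfl hNv
        (by simp [Ne.symm h3, Ne.symm e1, Ne.symm e2])
        (by
          intro x hx
          simp only [List.mem_cons, List.not_mem_nil, or_false] at hx ⊢
          rcases hx with rfl | rfl | rfl
          · simp
          · simp
          · simp [e3])
        (by simp [Cyc, e3])
        (by
          intro x hx
          simp only [List.mem_cons, List.not_mem_nil, or_false] at hx
          rcases hx with rfl | rfl | rfl
          · exact Setoid.refl' _ _
          · exact sc_step ρ _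
          · exact Setoid.trans' _ (sc_step ρ _) (sc_step ρ _))
      have hwt : wt ρ σ (vs ++ [σ a, ρ (σ a), ρ (ρ (σ a))]) (insert a (insert (σ a) ps)) =
          wt ρ σ vs ps + 3 := by
        unfold wt
        rw [hflt]
        simp [h3, e3, Ne.symm e1]
        omega
      have hw := (wt_le ρ σ (vs ++ [σ a, ρ (σ a), ρ (ρ (σ a))])
        (insert a (insert (σ a) ps)) I'.nd).trans hN
      have hM : (vs ++ [σ a, ρ (σ a), ρ (ρ (σ a))]).length ≤ 24 := by unfold wt at hw; omega
      have hM' : vs.length + 3 ≤ 24 := by simpa using hM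
      obtain ⟨b, rfl⟩ : ∃ k, b = k + 1 := ⟨b - 1, by omega⟩
      have j0 : (vs ++ [σ a, ρ (σ a), ρ (ρ (σ a))]).idxOf (σ a) = vs.length := by
        rw [hidx2 _ _ h2]; simp
      have j1 : (vs ++ [σ a, ρ (σ a), ρ (ρ (σ a))]).idxOf (ρ (σ a)) = vs.length + 1 := by
        rw [hidx2 _ _ v1]; simp [List.idxOf_cons, Ne.symm h3]
      have j2 : (vs ++ [σ a, ρ (σ a), ρ (ρ (σ a))]).idxOf (ρ (ρ (σ a))) = vs.length + 2 := by
        rw [hidx2 _ _ v2]; simp [List.idxOf_cons, Ne.symm e1, Ne.symm e2]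
      obtain ⟨l, hl, hl1, hl2⟩ := ih f' b _ _ _ _ _
        (setD32 (setD32 (setD32 r vs.length (vs.length + 1)) (vs.length + 1) (vs.length + 2))
          (vs.length + 2) vs.length) (2 :: w) I'
        (by omega) (by simp; omega) (by simp; omega) (by
          intro x hx
          simp only [List.mem_append, List.mem_cons, List.not_mem_nil, or_false] at hx
          rw [getD32_setD32 _ _ _ _ (by omega), getD32_setD32 _ _ _ _ (by omega),
            getD32_setD32 _ _ _ _ (by omega)]
          by_cases hxv : x ∈ vs
          · have := hidx x hxv
            rw [hidx1 _ _ hxv, hidx1 _ _ (I.rcl x hxv), if_neg (by omega), if_neg (by omega),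
              if_neg (by omega), hr x hxv]
          · rcases hx.resolve_left hxv with rfl | rfl | rfl
            · rw [j0, j1]; simp
            · rw [j1, j2]; simp
            · rw [e3, j0, j2]; simp) (hs' _ hM) (hd' _)
      rw [hst [ρ (σ a), ρ (ρ (σ a))] hNv (by simp [Ne.symm h3, Ne.symm e1])] at hl hl1
      refine ⟨l, ?_, ?_, hl2⟩
      · rw [List.mem_append]
        left
        simp only [List.mem_append]
        right; right
        simp only [List.nil_append, List.cons_append, List.map_cons, hcmap, List.length_append,
          List.length_cons, List.length_nil, j1, j2] at hl
        rwa [List.map_congr_left (hstack _)] at hl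
      · rw [hl1, peel_V eqD_iff _ _ _ _ _ _ h1 hbc h3]
        simp

end K3MM

namespace K3MM

/-! ### the three searches -/

/-- all leaves of the three searches -/
noncomputable def allLeaves : List (ℕ × ℕ × ℕ × List ℕ) :=
  leaves true true 60 7 [[0]] 1 0 0 [0] ++
    (leaves false true 60 6 [[1, 2]] 3 0 65 [0, 1] ++
      leaves false false 60 7 [[0, 1, 2]] 3 0 65 [1])

theorem r65 : getD32 65 0 = 1 ∧ getD32 65 1 = 2 ∧ getD32 65 2 = 0 ∧ getD32 0 0 = 0 := by
  decide +kernel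

theorem Inv.start3 {D : Type} [DecidableEq D] [Finite D] {ρ σ : Equiv.Perm D} {d : D}
    (hρ : ∀ x, ρ (ρ (ρ x)) = x) (h : ρ d ≠ d) :
    Inv ρ σ d 1 [d, ρ d, ρ (ρ d)] ∅ [[d, ρ d, ρ (ρ d)]] := by
  have e1 : ρ (ρ d) ≠ d := by
    intro h'
    have := hρ d
    rw [h'] at this
    exact h this
  have e2 : ρ (ρ d) ≠ ρ d := fun h' => h (ρ.injective h')
  have hc : ∀ x, comp ρ 1 x (ρ x) := fun x => (le_sup_left : sc ρ ≤ comp ρ 1) (sc_step ρ x)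
  refine ⟨by simp, by simp [Ne.symm h, Ne.symm e1, Ne.symm e2], ?_, by simp, by simp, by simp,
    by simp, ?_, ?_, by simp [Ne.symm h, Ne.symm e1, Ne.symm e2], by simp, by simp⟩
  · intro x hx
    simp only [List.mem_cons, List.not_mem_nil, or_false] at hx ⊢
    rcases hx with rfl | rfl | rfl
    · simp
    · simp
    · simp [hρ]
  · intro x hx
    simp only [List.mem_cons, List.not_mem_nil, or_false] at hx
    rcases hx with rfl | rfl | rfl
    · exact Setoid.refl' _ _
    · exact hc _
    · exact Setoid.trans' _ (hc _) (hc _)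
  · simp [Cyc, hρ]

theorem Inv.start1 {D : Type} [DecidableEq D] [Finite D] {ρ σ : Equiv.Perm D} {d : D}
    (h : ρ d = d) : Inv ρ σ d 1 [d] ∅ [[d]] := by
  refine ⟨by simp, by simp, by simp [h], by simp, by simp, by simp,
    by simp, ?_, by simp [Cyc, h], by simp, by simp, by simp⟩
  intro x hx
  rw [List.mem_singleton.1 hx]

theorem peel_pos {D : Type} [DecidableEq D] {ρ σ : D → D} (f : ℕ) (a : D) (c : List D)
    (r : List (List D)) (h : σ a ≠ a) :
    ∃ x l, 0 < x ∧ peel eqD σ ρ (f + 1) ((a :: c) :: r) = x :: l := by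
  by_cases hc : σ a ∈ c
  · obtain ⟨X, Y, rfl, hX⟩ := List.eq_append_cons_of_mem hc
    exact ⟨_, _, by omega, peel_M eqD_iff _ _ _ _ _ _ _ h hX⟩
  · by_cases hu : ρ (σ a) = σ a
    · exact ⟨_, _, by omega, peel_U eqD_iff _ _ _ _ _ _ h hc hu⟩
    · exact ⟨_, _, by omega, peel_V eqD_iff _ _ _ _ _ _ h hc hu⟩

theorem complete_root {D : Type} [DecidableEq D] [Fintype D] {ρ σ : Equiv.Perm D} {d : D}
    (hσ : ∀ x, σ (σ x) = x) (hρ : ∀ x, ρ (ρ (ρ x)) = x) (hP : Psi ρ σ ≤ Psi ρ 1)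
    (hconn : ∀ x, comp ρ σ d x)
    (hN : Fintype.card D + 2 * (Finset.univ.filter fun x => ρ x = x).card +
      3 * (Finset.univ.filter fun x => σ x = x).card ≤ 24)
    (hmin : ∀ y, key eqD σ ρ d ≤ key eqD σ ρ y) :
    ∃ l ∈ allLeaves, l.2.2.2.reverse = key eqD σ ρ d ∧ IsTab σ ρ d l.1 l.2.1 l.2.2.1 := by
  obtain ⟨r0, r1, r2, r3⟩ := r65
  have hcard : Fintype.card D ≤ 24 := by omega
  by_cases h1 : ∃ y, ρ y = y
  · obtain ⟨y, hy⟩ := h1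
    have hd : ρ d = d := by
      by_contra hd
      have := hmin y
      rw [key_fix eqD_iff _ _ _ hy, key_nfix eqD_iff _ _ _ hd, ccl] at this
      omega
    obtain ⟨l, hl, hl1, hl2⟩ := complete hσ hρ hP hconn hN true true (fun _ _ => rfl)
      (fun _ _ => rfl) 60 60 7 [d] ∅ 1 [[d]] 0 0 [0] (Inv.start1 hd) (by simp [wt, hd])
      (by simp; omega) (by simp; omega) (by simp [hd, r3]) (by simp) (by simp)
    refine ⟨l, ?_, ?_, hl2⟩
    · rw [allLeaves, List.mem_append]
      left
      simpa [opn] using hl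
    · rw [hl1, key_fix eqD_iff _ _ _ hd]
      simp [opn]
  have h1' : ∀ y, ρ y ≠ y := fun y hy => h1 ⟨y, hy⟩
  have hd := h1' d
  have e1 : ρ (ρ d) ≠ d := by
    intro h'
    have := hρ d
    rw [h'] at this
    exact hd this
  have e2 : ρ (ρ d) ≠ ρ d := fun h' => hd (ρ.injective h')
  have j0 : [d, ρ d, ρ (ρ d)].idxOf d = 0 := by simp
  have j1 : [d, ρ d, ρ (ρ d)].idxOf (ρ d) = 1 := by simp [List.idxOf_cons, Ne.symm hd]
  have j2 : [d, ρ d, ρ (ρ d)].idxOf (ρ (ρ d)) = 2 := by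
    simp [List.idxOf_cons, Ne.symm e1, Ne.symm e2]
  have I := Inv.start3 (σ := σ) hρ hd
  have hr : ∀ x ∈ [d, ρ d, ρ (ρ d)], getD32 65 ([d, ρ d, ρ (ρ d)].idxOf x) =
      [d, ρ d, ρ (ρ d)].idxOf (ρ x) := by
    intro x hx
    simp only [List.mem_cons, List.not_mem_nil, or_false] at hx
    rcases hx with rfl | rfl | rfl
    · rw [j0, j1, r0]
    · rw [j1, j2, r1]
    · rw [j2, hρ, j0, r2]
  have hwt : ∀ p, wt ρ σ [d, ρ d, ρ (ρ d)] p = 3 + 3 * (p.filter fun x => σ x = x).card := by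
    intro p
    simp [wt, h1']
  by_cases h2 : ∃ y, σ y = y
  · obtain ⟨y, hy⟩ := h2
    have hds : σ d = d := by
      by_contra hds
      have := hmin y
      obtain ⟨x, l, hx, hl⟩ := peel_pos (σ := σ) (ρ := ρ) 59 d [ρ d, ρ (ρ d)] [] hds
      rw [key_nfix eqD_iff _ _ _ hd, key_nfix eqD_iff _ _ _ (h1' y), peel_H eqD_iff _ _ _ _ _ _ hy,
        hl, ccl, ccl] at this
      omega
    have I' := I.half (by simp) (by simp) hds
    obtain ⟨l, hl, hl1, hl2⟩ := complete hσ hρ hP hconn hN false true (fun x h => (h1' x h).elim)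
      (fun _ _ => rfl) 60 59 6 _ _ 1 _ 0 65 [0, 1] I' (by rw [hwt, Finset.filter_insert, if_pos hds]; simp)
      (by simp; omega) (by simp; omega) hr
      (by simp [hds, r3]) j0
    have ho : opn (insert d ∅) [d, ρ d, ρ (ρ d)] = [ρ d, ρ (ρ d)] := by
      simp [opn, hd, e1]
    refine ⟨l, ?_, ?_, hl2⟩
    · rw [allLeaves, List.mem_append, List.mem_append]
      right; left
      simpa only [List.map_cons, List.map_nil, ho, List.length_cons, List.length_nil, Nat.reduceAdd,
        j1, j2] using hl
    · rw [hl1, key_nfix eqD_iff _ _ _ hd, peel_H eqD_iff _ _ _ _ _ _ hds]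
      simp [opn, hd, e1]
  · have h2' : ∀ y, σ y ≠ y := fun y hy => h2 ⟨y, hy⟩
    obtain ⟨l, hl, hl1, hl2⟩ := complete hσ hρ hP hconn hN false false
      (fun x h => (h1' x h).elim) (fun x h => (h2' x h).elim) 60 60 7 _ _ 1 _ 0 65 [1] I
      (by rw [hwt]; simp) (by simp; omega) (by simp; omega) hr (by simp) j0
    have ho : opn ∅ [d, ρ d, ρ (ρ d)] = [d, ρ d, ρ (ρ d)] := by
      simp [opn]
    refine ⟨l, ?_, ?_, hl2⟩
    · rw [allLeaves, List.mem_append, List.mem_append]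
      right; right
      simpa only [List.map_cons, List.map_nil, ho, List.length_cons, List.length_nil, Nat.reduceAdd,
        j0, j1, j2] using hl
    · rw [hl1, key_nfix eqD_iff _ _ _ hd]
      simp [opn]

theorem allLeaves_nodup : allLeaves.Pairwise fun l l' => l.2.2.2 ≠ l'.2.2.2 := by
  have suff : ∀ (u u' v v' : List ℕ) (x y : ℕ), u ++ [x] = u' ++ [y] → x = y := by
    intro u u' v v' x y h
    exact List.concat_inj.1 (by simpa using h) |>.2
  rw [allLeaves, List.pairwise_append, List.pairwise_append]
  refine ⟨leaves_nodup _ _ _ _ _ _ _ _ _, ⟨leaves_nodup _ _ _ _ _ _ _ _ _,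
    leaves_nodup _ _ _ _ _ _ _ _ _, ?_⟩, ?_⟩
  · intro l hl l' hl' h
    obtain ⟨u, hu, -⟩ := leaves_suffix _ _ _ _ _ _ _ _ _ _ hl
    obtain ⟨u', hu', h0⟩ := leaves_suffix _ _ _ _ _ _ _ _ _ _ hl'
    rw [hu, hu'] at h
    have h2 : u ++ [0] = u' := by
      have : (u ++ [0]) ++ [1] = u' ++ [1] := by simpa using h
      exact List.append_cancel_right this
    exact h0 rfl (by simp [← h2])
  · intro l hl l' hl' h
    obtain ⟨u, hu, -⟩ := leaves_suffix _ _ _ _ _ _ _ _ _ _ hl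
    rw [List.mem_append] at hl'
    rcases hl' with hl' | hl'
    · obtain ⟨u', hu', -⟩ := leaves_suffix _ _ _ _ _ _ _ _ _ _ hl'
      rw [hu, hu'] at h
      have := congrArg List.reverse h
      simp at this
    · obtain ⟨u', hu', -⟩ := leaves_suffix _ _ _ _ _ _ _ _ _ _ hl'
      rw [hu, hu'] at h
      have := congrArg List.reverse h
      simp at this

/-- the leaf words that are canonical -/
noncomputable def goodLeaves : List (ℕ × ℕ × ℕ × List ℕ) := allLeaves.filter fun l => lval l = 1

theorem count_ones {α : Type} (L : List α) (g : α → ℕ)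
    (h : ∀ x ∈ L, g x = 0 ∨ g x = 1 ∨ g x = 10000) (hs : (L.map g).sum < 10000) :
    (L.filter fun x => g x = 1).length = (L.map g).sum ∧ ∀ x ∈ L, g x = 0 ∨ g x = 1 := by
  induction L with
  | nil => simp
  | cons a L ih =>
    rw [List.map_cons, List.sum_cons] at hs ⊢
    obtain ⟨i1, i2⟩ := ih (fun x hx => h x (List.mem_cons_of_mem _ hx)) (by omega)
    have ha := h a List.mem_cons_self
    constructor
    · rw [List.filter_cons]
      rcases ha with ha | ha | ha
      · simp [ha, i1]
      · simp [ha, i1]; omega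
      · omega
    · intro x hx
      rcases List.mem_cons.1 hx with rfl | hx
      · omega
      · exact i2 x hx

theorem lval_cases (l : ℕ × ℕ × ℕ × List ℕ) : lval l = 0 ∨ lval l = 1 ∨ lval l = 10000 := by
  unfold lval
  rcases leafVal_eq l.1 l.2.1 l.2.2.1 l.2.2.2.reverse with h | ⟨-, h | h⟩ <;> tauto

end K3MM

namespace K3MM

/-! ### counting cycles, genus -/

theorem sum_eq_mul_nq {D : Type} [Fintype D] [DecidableEq D] (t : Setoid D) (f : D → ℕ) (p : ℕ)
    (h : ∀ a, ∃ F : Finset D, (∀ x, x ∈ F ↔ t a x) ∧ ∑ x ∈ F, f x = p) :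
    ∑ x, f x = p * nq t := by
  classical
  have : Fintype (Quotient t) := Fintype.ofFinite _
  rw [← Finset.sum_fiberwise (s := Finset.univ) (g := fun x => Quotient.mk t x) (f := f)]
  have : ∀ q : Quotient t, ∑ x with Quotient.mk t x = q, f x = p := by
    intro q
    induction q using Quotient.inductionOn with
    | h a =>
      obtain ⟨F, hF, hs⟩ := h a
      rw [← hs]
      refine Finset.sum_congr ?_ fun _ _ => rfl
      ext x
      simp only [Finset.mem_filter, Finset.mem_univ, true_and, hF]
      rw [Quotient.eq]
      exact ⟨fun h => t.symm h, fun h => t.symm h⟩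
  rw [Finset.sum_congr rfl fun q _ => this q]
  simp [nq, Nat.card_eq_fintype_card, mul_comm]

theorem sc_mem {D : Type} [Finite D] {π : Equiv.Perm D} {a x : D} (h : sc π a x) (P : D → Prop)
    (ha : P a) (hP : ∀ y, P y → P (π y)) : P x := by
  obtain ⟨n, rfl⟩ := (sc_iff.1 h).exists_nat_pow_eq
  clear h
  induction n with
  | zero => simpa using ha
  | succ n ih =>
    rw [pow_succ', Equiv.Perm.mul_apply]
    exact hP _ ih

theorem sum_fix {D : Type} [Fintype D] [DecidableEq D] (π : D → D) (k : ℕ) :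
    ∑ x, (if π x = x then k + 1 else 1) =
      Fintype.card D + k * (Finset.univ.filter fun x => π x = x).card := by
  have : ∀ x, (if π x = x then k + 1 else 1) = 1 + (if π x = x then k else 0) := by
    intro x; split_ifs <;> omega
  simp only [this, Finset.sum_add_distrib, ← Finset.sum_filter]
  simp [mul_comm]

theorem nq_two {D : Type} [Fintype D] [DecidableEq D] {σ : Equiv.Perm D}
    (hσ : ∀ x, σ (σ x) = x) :
    2 * nq (sc σ) = Fintype.card D + (Finset.univ.filter fun x => σ x = x).card := by
  have := sum_fix σ 1
  rw [one_mul] at this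
  rw [← this]
  symm
  apply sum_eq_mul_nq
  intro a
  by_cases h : σ a = a
  · refine ⟨{a}, fun x => ?_, by simp [h]⟩
    rw [Finset.mem_singleton]
    constructor
    · rintro rfl; exact Setoid.refl' _ _
    · intro hx
      exact sc_mem hx (fun y => y = a) rfl (fun y hy => by rw [hy, h])
  · have h' : σ (σ a) ≠ σ a := fun e => h (σ.injective e)
    refine ⟨{a, σ a}, fun x => ?_, ?_⟩
    · simp only [Finset.mem_insert, Finset.mem_singleton]
      constructor
      · rintro (rfl | rfl)
        · exact Setoid.refl' _ _
        · exact sc_step _ _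
      · intro hx
        refine sc_mem hx (fun y => y = a ∨ y = σ a) (Or.inl rfl) ?_
        rintro y (rfl | rfl)
        · exact Or.inr rfl
        · exact Or.inl (hσ _)
    · rw [Finset.sum_pair (Ne.symm h), if_neg h, if_neg h']

theorem nq_three {D : Type} [Fintype D] [DecidableEq D] {ρ : Equiv.Perm D}
    (hρ : ∀ x, ρ (ρ (ρ x)) = x) :
    3 * nq (sc ρ) = Fintype.card D + 2 * (Finset.univ.filter fun x => ρ x = x).card := by
  have := sum_fix ρ 2
  rw [← this]
  symm
  apply sum_eq_mul_nq
  intro a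
  by_cases h : ρ a = a
  · refine ⟨{a}, fun x => ?_, by simp [h]⟩
    rw [Finset.mem_singleton]
    constructor
    · rintro rfl; exact Setoid.refl' _ _
    · intro hx
      exact sc_mem hx (fun y => y = a) rfl (fun y hy => by rw [hy, h])
  · have h' : ρ (ρ a) ≠ ρ a := fun e => h (ρ.injective e)
    have h'' : ρ (ρ (ρ a)) ≠ ρ (ρ a) := fun e => h' (ρ.injective e)
    have h3 : a ≠ ρ (ρ a) := by rw [hρ] at h''; exact h''
    refine ⟨{a, ρ a, ρ (ρ a)}, fun x => ?_, ?_⟩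
    · simp only [Finset.mem_insert, Finset.mem_singleton]
      constructor
      · rintro (rfl | rfl | rfl)
        · exact Setoid.refl' _ _
        · exact sc_step _ _
        · exact Setoid.trans' _ (sc_step _ _) (sc_step _ _)
      · intro hx
        refine sc_mem hx (fun y => y = a ∨ y = ρ a ∨ y = ρ (ρ a)) (Or.inl rfl) ?_
        rintro y (rfl | rfl | rfl)
        · exact Or.inr (Or.inl rfl)
        · exact Or.inr (Or.inr rfl)
        · exact Or.inl (hρ _)
    · rw [Finset.sum_insert (by simp [Ne.symm h, h3]), Finset.sum_pair (Ne.symm h'), if_neg h,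
        if_neg h', if_neg h'']
      norm_num

theorem nq_le_of_map {D : Type} [Finite D] {s t : Setoid D} (g : D → D)
    (hg : Function.Surjective g) (h : ∀ x y, s x y → t (g x) (g y)) : nq t ≤ nq s := by
  refine Nat.card_le_card_of_surjective (Quotient.map g (fun a b hab => h a b hab)) ?_
  intro q
  induction q using Quotient.inductionOn with
  | h x =>
    obtain ⟨y, rfl⟩ := hg x
    exact ⟨Quotient.mk s y, rfl⟩

theorem nq_comm_le {D : Type} [Finite D] (σ ρ : Equiv.Perm D) :
    nq (sc (σ * ρ)) ≤ nq (sc (ρ * σ)) := by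
  refine nq_le_of_map σ σ.surjective fun x y h => ?_
  refine sc_mem h (fun y => sc (σ * ρ) (σ x) (σ y)) (Setoid.refl' _ _) fun y hy => ?_
  exact Setoid.trans' _ hy (sc_step _ _)

theorem nq_comm {D : Type} [Finite D] (σ ρ : Equiv.Perm D) :
    nq (sc (σ * ρ)) = nq (sc (ρ * σ)) :=
  le_antisymm (nq_comm_le σ ρ) (nq_comm_le ρ σ)

theorem nq_top {D : Type} [Finite D] [Nonempty D] (t : Setoid D) (h : ∀ x y, t x y) :
    nq t = 1 := by
  have : Subsingleton (Quotient t) := ⟨fun a b => by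
    induction a using Quotient.inductionOn with
    | h x =>
      induction b using Quotient.inductionOn with
      | h y => exact Quotient.sound (h x y)⟩
  have : Nonempty (Quotient t) := ⟨Quotient.mk t (Classical.arbitrary D)⟩
  exact Nat.card_unique

theorem Psi_one {D : Type} [Fintype D] [DecidableEq D] (ρ : Equiv.Perm D) :
    Psi ρ 1 = 2 * nq (sc ρ) := by
  have : comp ρ 1 = sc ρ := by
    refine le_antisymm (sup_le le_rfl (sc_le fun x => ?_)) le_sup_left
    exact Setoid.refl' _ _
  rw [Psi, this, mul_one]
  simp
  ring

theorem Psi_conn {D : Type} [Fintype D] [DecidableEq D] [Nonempty D] (ρ σ : Equiv.Perm D)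
    (h : ∀ x y, comp ρ σ x y) : Psi ρ σ = 4 - 2 * nq (sc (σ * ρ)) + Fintype.card D -
      (Finset.univ.filter fun x => σ x = x).card := by
  have h1 : σ.support.card + (Finset.univ.filter fun x => σ x = x).card = Fintype.card D := by
    have : σ.support = Finset.univ.filter fun x => ¬ σ x = x := by
      ext x; simp
    rw [this, add_comm, Finset.card_filter_add_card_filter_not]
    rfl
  rw [Psi, nq_top _ h, nq_comm, ← h1]
  push_cast
  ring

/-- the combinatorial condition on an action -/
structure Good {D : Type} [Fintype D] [DecidableEq D] (σ ρ : Equiv.Perm D) : Prop where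
  hs : ∀ x, σ (σ x) = x
  hr : ∀ x, ρ (ρ (ρ x)) = x
  conn : ∀ x y, comp ρ σ x y
  genus : nq (sc σ) + nq (sc ρ) + nq (sc (σ * ρ)) = Fintype.card D + 2
  bound : Fintype.card D + 2 * (Finset.univ.filter fun x => ρ x = x).card +
      3 * (Finset.univ.filter fun x => σ x = x).card ≤ 24

theorem Good.psi {D : Type} [Fintype D] [DecidableEq D] {σ ρ : Equiv.Perm D} (h : Good σ ρ)
    (d : D) : Psi ρ σ ≤ Psi ρ 1 := by
  have : Nonempty D := ⟨d⟩
  rw [Psi_one, Psi_conn ρ σ h.conn]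
  have h1 := nq_two h.hs
  have h2 := h.genus
  omega

theorem genus_of_ge {D : Type} [Fintype D] [DecidableEq D] {σ ρ : Equiv.Perm D} (d : D)
    (hs : ∀ x, σ (σ x) = x) (conn : ∀ x y, comp ρ σ x y)
    (h : Fintype.card D + 2 ≤ nq (sc σ) + nq (sc ρ) + nq (sc (σ * ρ))) :
    nq (sc σ) + nq (sc ρ) + nq (sc (σ * ρ)) = Fintype.card D + 2 := by
  have : Nonempty D := ⟨d⟩
  have h0 := Psi_one_le ρ hs
  rw [Psi_one, Psi_conn ρ σ conn] at h0
  have h1 := nq_two hs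
  omega

theorem returns_succ (t : ℕ → ℕ) (i f x : ℕ) : returns t i (f + 1) x = true ↔
    t x = i ∨ (i < t x ∧ returns t i f (t x) = true) := by
  change force (t x) (fun y => bc (Nat.beq y i) true (bc (Nat.ble y i) false (returns t i f y))) =
    true ↔ _
  rw [force_eq, bc_eq, bc_eq]
  by_cases h : t x = i
  · simp [h]
  · by_cases h' : t x ≤ i
    · have : ¬ i < t x := by omega
      simp [h, h', this]
    · simp [h, h']
      omega

theorem valid_spec (n : ℕ) (S R : ℕ → ℕ) (h : validB n S R = true) :
    ∃ (σ ρ : Equiv.Perm (Fin n)), (∀ i, (σ i : ℕ) = S i) ∧ (∀ i, (ρ i : ℕ) = R i) ∧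
      Good σ ρ ∧ 0 < n := by
  unfold validB at h
  simp only [bc_eq, force_eq, cntLT_eq, nbeq] at h
  rw [if_congr (allLT_eq _ _) rfl rfl] at h
  split_ifs at h with h1 h2 h3
  simp only [Nat.ble_eq] at h2 h3 h1
  have h4 := (nbeq _ _).1 h
  clear h
  have hS : ∀ i < n, S i < n ∧ R i < n ∧ S (S i) = i ∧ R (R (R i)) = i ∧
      (i = 0 ∨ S i < i ∨ R i < i ∨ R (R i) < i) := by
    intro i hi
    have := h1 i hi
    split_ifs at this <;> first | contradiction | (refine ⟨?_, ?_, ?_, ?_, ?_⟩ <;> omega)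
  let σ : Equiv.Perm (Fin n) := ⟨fun i => ⟨S i, (hS i i.2).1⟩, fun i => ⟨S i, (hS i i.2).1⟩,
    fun i => Fin.ext (hS i i.2).2.2.1, fun i => Fin.ext (hS i i.2).2.2.1⟩
  let ρ : Equiv.Perm (Fin n) := ⟨fun i => ⟨R i, (hS i i.2).2.1⟩,
    fun i => ⟨R (R i), (hS _ (hS i i.2).2.1).2.1⟩,
    fun i => Fin.ext (hS i i.2).2.2.2.1, fun i => Fin.ext (hS i i.2).2.2.2.1⟩
  have hs : ∀ x, σ (σ x) = x := fun i => Fin.ext (hS i i.2).2.2.1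
  have hr : ∀ x, ρ (ρ (ρ x)) = x := fun i => Fin.ext (hS i i.2).2.2.2.1
  have cs : ∀ x, comp ρ σ x (σ x) := fun x => (le_sup_right : sc σ ≤ comp ρ σ) (sc_step σ x)
  have cr : ∀ x, comp ρ σ x (ρ x) := fun x => (le_sup_left : sc ρ ≤ comp ρ σ) (sc_step ρ x)
  have conn0 : ∀ k (hk : k < n), comp ρ σ ⟨0, h2⟩ ⟨k, hk⟩ := by
    intro k
    induction k using Nat.strong_induction_on with
    | _ k ih =>
      intro hk
      rcases (hS k hk).2.2.2.2 with h | h | h | h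
      · subst h; exact Setoid.refl' _ _
      · exact Setoid.trans' _ (ih (S k) h (hS k hk).1) (Setoid.symm' _ (cs ⟨k, hk⟩))
      · exact Setoid.trans' _ (ih (R k) h (hS k hk).2.1) (Setoid.symm' _ (cr ⟨k, hk⟩))
      · exact Setoid.trans' _ (ih (R (R k)) h (ρ (ρ ⟨k, hk⟩)).2)
          (Setoid.symm' _ (Setoid.trans' _ (cr ⟨k, hk⟩) (cr _)))
  have conn : ∀ x y, comp ρ σ x y := fun x y =>
    Setoid.trans' _ (Setoid.symm' _ (conn0 x x.2)) (conn0 y y.2)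
  have hcnt : ∀ (p : ℕ → Prop) [DecidablePred p], ((Finset.range n).filter p).card =
      (Finset.univ.filter fun x : Fin n => p x).card := by
    intro p _
    rw [← Finset.card_map Fin.valEmbedding]
    congr 1
    ext k
    simp only [Finset.mem_filter, Finset.mem_range, Finset.mem_map, Finset.mem_univ, true_and,
      Fin.valEmbedding_apply]
    constructor
    · rintro ⟨hk, hp⟩
      exact ⟨⟨k, hk⟩, hp, rfl⟩
    · rintro ⟨x, hx, rfl⟩
      exact ⟨x.2, hx⟩
  have e2 : ((Finset.range n).filter fun i => S i = i).card =
      (Finset.univ.filter fun x => σ x = x).card := by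
    rw [hcnt]
    congr 1
    ext x
    simp [σ, Fin.ext_iff]
  have e3 : ((Finset.range n).filter fun i => R i = i).card =
      (Finset.univ.filter fun x => ρ x = x).card := by
    rw [hcnt]
    congr 1
    ext x
    simp [ρ, Fin.ext_iff]
  have hh : ((Finset.range n).filter fun i => returns (fun x => S (R x)) i 25 i = true).card ≤
      nq (sc (σ * ρ)) := by
    rw [hcnt]
    have key : ∀ i : Fin n, returns (fun x => S (R x)) i 25 i = true → ∀ y, sc (σ * ρ) i y →
        i ≤ y := by
      intro i hi y hy
      refine (sc_mem hy (fun y => i ≤ y ∧ ∃ f, returns (fun x => S (R x)) i f y = true)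
        ⟨le_rfl, 25, hi⟩ ?_).1
      rintro y ⟨-, f, hf⟩
      cases f with
      | zero => exact absurd hf (by simp [returns])
      | succ f =>
        rw [returns_succ] at hf
        rcases hf with hf | ⟨hf, hf'⟩
        · have : (σ * ρ) y = i := Fin.ext hf
          rw [this]
          exact ⟨le_rfl, 25, hi⟩
        · exact ⟨le_of_lt hf, f, hf'⟩
    rw [← Fintype.card_subtype, ← Nat.card_eq_fintype_card]
    refine Nat.card_le_card_of_injective (fun x => Quotient.mk (sc (σ * ρ)) x.1) ?_
    rintro ⟨x, hx⟩ ⟨y, hy⟩ hxy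
    have hxy : sc (σ * ρ) x y := Quotient.exact hxy
    exact Subtype.ext (le_antisymm (key x hx y hxy) (key y hy x (Setoid.symm' _ hxy)))
  refine ⟨σ, ρ, fun _ => rfl, fun _ => rfl, ⟨hs, hr, conn, ?_, ?_⟩, h2⟩
  · refine genus_of_ge ⟨0, h2⟩ hs conn ?_
    have a1 := nq_two hs
    have a2 := nq_three hr
    rw [← e2] at a1
    rw [← e3] at a2
    simp only [Nat.add_eq, Nat.mul_eq] at h4
    rw [Fintype.card_fin] at *
    omega
  · rw [← e2, ← e3, Fintype.card_fin]
    simp only [Nat.add_eq, Nat.mul_eq] at h3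
    omega

end K3MM

namespace K3MM

/-! ### the combinatorial classification -/

theorem allLeaves_sum : (allLeaves.map lval).sum = 3228 := by
  rw [allLeaves, List.map_append, List.map_append, List.sum_append, List.sum_append,
    ← total_eq, ← total_eq, ← total_eq, tot1, tot2, tot3]

theorem goodLeaves_length : goodLeaves.length = 3228 := by
  have := (count_ones allLeaves lval (fun x _ => lval_cases x)
    (by rw [allLeaves_sum]; omega)).1
  rw [allLeaves_sum] at this
  exact this

theorem lval_le {l : ℕ × ℕ × ℕ × List ℕ} (hl : l ∈ allLeaves) : lval l = 0 ∨ lval l = 1 :=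
  (count_ones allLeaves lval (fun x _ => lval_cases x) (by rw [allLeaves_sum]; omega)).2 l hl

/-- the canonical words -/
noncomputable def words : Finset (List ℕ) := (goodLeaves.map fun l => l.2.2.2.reverse).toFinset

theorem words_card : words.card = 3228 := by
  rw [words, List.toFinset_card_of_nodup, List.length_map, goodLeaves_length]
  rw [List.Nodup, List.pairwise_map]
  refine (List.Pairwise.sublist List.filter_sublist allLeaves_nodup).imp ?_
  intro a b h h'
  exact h (List.reverse_injective h')

theorem mem_words {w : List ℕ} :
    w ∈ words ↔ ∃ l ∈ allLeaves, lval l = 1 ∧ l.2.2.2.reverse = w := by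
  simp [words, goodLeaves, and_assoc]

theorem good_key {D : Type} [DecidableEq D] [Fintype D] {ρ σ : Equiv.Perm D} {d : D}
    (hG : Good σ ρ) (hmin : ∀ y, key eqD σ ρ d ≤ key eqD σ ρ y) :
    ∃ l ∈ allLeaves, lval l = 1 ∧ l.2.2.2.reverse = key eqD σ ρ d ∧
      IsTab σ ρ d l.1 l.2.1 l.2.2.1 := by
  obtain ⟨l, hl, hw, hT⟩ := complete_root hG.hs hG.hr (hG.psi d) (hG.conn d) hG.bound hmin
  refine ⟨l, hl, ?_, hw, hT⟩
  refine (lval_le hl).resolve_left fun h0 => ?_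
  obtain ⟨ι, hi, -, hsur, -, hs, hr⟩ := hT
  have hC : CanonT l.1 l.2.1 l.2.2.1 l.2.2.2.reverse := by
    intro k hk
    obtain ⟨y, rfl⟩ := hsur k hk
    rw [key_nat eqD_iff σ ρ nbeq ι hi hs hr, hw]
    exact hmin y
  unfold lval at h0
  rcases leafVal_eq l.1 l.2.1 l.2.2.1 l.2.2.2.reverse with h | ⟨-, h | h⟩
  · exact h.2 hC
  · omega
  · omega

theorem key_mem_words {D : Type} [DecidableEq D] [Fintype D] {ρ σ : Equiv.Perm D} {d : D}
    (hG : Good σ ρ) (hmin : ∀ y, key eqD σ ρ d ≤ key eqD σ ρ y) : key eqD σ ρ d ∈ words := by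
  obtain ⟨l, hl, h1, hw, -⟩ := good_key hG hmin
  exact mem_words.2 ⟨l, hl, h1, hw⟩

theorem iso_of_key {D D' : Type} [DecidableEq D] [Fintype D] [DecidableEq D'] [Fintype D']
    {ρ σ : Equiv.Perm D} {d : D} {ρ' σ' : Equiv.Perm D'} {d' : D'}
    (hG : Good σ ρ) (hmin : ∀ y, key eqD σ ρ d ≤ key eqD σ ρ y)
    (hG' : Good σ' ρ') (hmin' : ∀ y, key eqD σ' ρ' d' ≤ key eqD σ' ρ' y)
    (h : key eqD σ ρ d = key eqD σ' ρ' d') :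
    ∃ e : D ≃ D', e d = d' ∧ (∀ x, e (σ x) = σ' (e x)) ∧ ∀ x, e (ρ x) = ρ' (e x) := by
  obtain ⟨l, hl, -, hw, ι, hi, hlt, hsur, h0, hs, hr⟩ := good_key hG hmin
  obtain ⟨l', hl', -, hw', ι', hi', hlt', hsur', h0', hs', hr'⟩ := good_key hG' hmin'
  have hll : l = l' := by
    by_contra hne
    have : Std.Symm fun l l' : ℕ × ℕ × ℕ × List ℕ => l.2.2.2 ≠ l'.2.2.2 :=
      ⟨fun a b hab => hab.symm⟩
    have := allLeaves_nodup.forall hl hl' hne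
    refine this (List.reverse_injective ?_)
    rw [hw, hw', h]
  subst hll
  have hex : ∀ x, ∃ y, ι' y = ι x := fun x => hsur' _ (hlt x)
  choose e he using hex
  have hbij : Function.Bijective e := by
    constructor
    · intro x y hxy
      apply hi
      rw [← he, ← he, hxy]
    · intro y
      obtain ⟨x, hx⟩ := hsur _ (hlt' y)
      exact ⟨x, hi' (by rw [he, hx])⟩
  refine ⟨Equiv.ofBijective e hbij, ?_, ?_, ?_⟩
  · exact hi' (by rw [Equiv.ofBijective_apply, he, h0, h0'])
  · intro x
    refine hi' ?_
    rw [Equiv.ofBijective_apply, Equiv.ofBijective_apply, he, hs, hs', he]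
  · intro x
    refine hi' ?_
    rw [Equiv.ofBijective_apply, Equiv.ofBijective_apply, he, hr, hr', he]

theorem exists_of_word {w : List ℕ} (h : w ∈ words) :
    ∃ (n : ℕ) (σ ρ : Equiv.Perm (Fin n)) (d : Fin n), Good σ ρ ∧ key eqD σ ρ d = w ∧
      ∀ y, key eqD σ ρ d ≤ key eqD σ ρ y := by
  obtain ⟨l, hl, h1, rfl⟩ := mem_words.1 h
  unfold lval at h1
  rcases leafVal_eq l.1 l.2.1 l.2.2.1 l.2.2.2.reverse with h | ⟨hC, h | ⟨-, hv, hw⟩⟩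
  · omega
  · omega
  obtain ⟨σ, ρ, hs, hr, hG, h0⟩ := valid_spec _ _ _ hv
  have hk : ∀ i : Fin l.1, key eqD σ ρ i = key Nat.beq (getD32 l.2.1) (getD32 l.2.2.1) i :=
    fun i => (key_nat eqD_iff σ ρ nbeq (fun i : Fin l.1 => (i : ℕ)) Fin.val_injective hs hr i).symm
  refine ⟨l.1, σ, ρ, ⟨0, h0⟩, hG, ?_, ?_⟩
  · rw [hk, hw]
  · intro y
    rw [hk, hk]
    change key _ _ _ 0 ≤ _
    rw [← hw]
    exact hC y y.2

end K3MM

namespace K3MM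

/-! ### the modular group -/

theorem xi_eq (m m' : SL2Z) (h : xi m = xi m') : m' = m ∨ m' = -m := by
  have h1 : m⁻¹ * m' ∈ pmOne := QuotientGroup.eq.1 h
  obtain ⟨k, hk⟩ := Subgroup.mem_zpowers_iff.1 h1
  have h2 : ((-1 : SL2Z)) ^ (2 : ℤ) = 1 := by
    rw [zpow_two]; simp
  have h3 : m' = m * (-1) ^ k := by rw [hk]; group
  rcases Int.even_or_odd' k with ⟨j, rfl | rfl⟩
  · left
    rw [h3, _root_.zpow_mul, h2, _root_.one_zpow, mul_one]
  · right
    rw [h3, _root_.zpow_add, _root_.zpow_mul, h2, _root_.one_zpow, one_mul, _root_.zpow_one]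
    simp

theorem xi_neg (m : SL2Z) : xi (-m) = xi m := by
  refine (QuotientGroup.eq.2 ?_).symm
  change m⁻¹ * -m ∈ pmOne
  have : m⁻¹ * -m = -1 := by simp
  rw [this]
  exact Subgroup.mem_zpowers _

theorem xi_surj (g : PSL2Z) : ∃ m, xi m = g := QuotientGroup.mk_surjective g

/-- lift of `S` -/
def mS : SL2Z := ⟨!![0, -1; 1, 0], by norm_num [Matrix.det_fin_two_of]⟩

/-- lift of `T` -/
def mT : SL2Z := ⟨!![1, 1; 0, 1], by norm_num [Matrix.det_fin_two_of]⟩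

/-- lift of `S T` -/
def mST : SL2Z := ⟨!![0, -1; 1, 1], by norm_num [Matrix.det_fin_two_of]⟩

theorem mS_coe : (mS : Matrix (Fin 2) (Fin 2) ℤ) = !![0, -1; 1, 0] := rfl

theorem mT_coe : (mT : Matrix (Fin 2) (Fin 2) ℤ) = !![1, 1; 0, 1] := rfl

theorem mST_coe : (mST : Matrix (Fin 2) (Fin 2) ℤ) = !![0, -1; 1, 1] := rfl

theorem Sp_def : Sp = xi mS := rfl

theorem Tp_def : Tp = xi mT := rfl

theorem Sp_sq : Sp * Sp = 1 := by
  rw [Sp_def, ← map_mul, ← map_one xi, ← xi_neg 1]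
  congr 1
  ext i j
  fin_cases i <;> fin_cases j <;> simp [mS_coe, Matrix.mul_apply, Fin.sum_univ_two]

theorem ST_eq : Sp * Tp = xi mST := by
  rw [Sp_def, Tp_def, ← map_mul]
  congr 1
  ext i j
  fin_cases i <;> fin_cases j <;> simp [mS_coe, mT_coe, mST_coe, Matrix.mul_apply, Fin.sum_univ_two]

theorem ST_cube : Sp * Tp * (Sp * Tp) * (Sp * Tp) = 1 := by
  rw [ST_eq, ← map_mul, ← map_mul, ← map_one xi, ← xi_neg 1]
  congr 1
  ext i j
  fin_cases i <;> fin_cases j <;> simp [mST_coe, Matrix.mul_apply, Fin.sum_univ_two]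

theorem T_eq : Tp = Sp * (Sp * Tp) := by rw [← mul_assoc, Sp_sq, one_mul]

theorem gen : Subgroup.closure {Sp, Sp * Tp} = (⊤ : Subgroup PSL2Z) := by
  have h1 : Subgroup.closure {Sp, Tp} = (⊤ : Subgroup PSL2Z) := by
    have h := congrArg (Subgroup.map xi) SpecialLinearGroup.SL2Z_generators
    rw [MonoidHom.map_closure, Set.image_pair, ← MonoidHom.range_eq_map,
      MonoidHom.range_eq_top.2 xi_surj] at h
    exact h
  rw [eq_top_iff, ← h1, Subgroup.closure_le]
  have hS : Sp ∈ Subgroup.closure {Sp, Sp * Tp} := Subgroup.subset_closure (by simp)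
  have hT : Sp * Tp ∈ Subgroup.closure {Sp, Sp * Tp} := Subgroup.subset_closure (by simp)
  rintro x (rfl | rfl)
  · exact hS
  · have h := mul_mem hS hT
    rw [← T_eq] at h
    exact h

/-- the orders of the two free factors -/
def ordB (b : Bool) : ℕ := bif b then 3 else 2

instance (b : Bool) : NeZero (ordB b) := by cases b <;> exact ⟨by decide⟩

/-- homomorphisms from a cyclic group -/
def cycHom {G : Type*} [Group G] (n : ℕ) [NeZero n] (g : G) (h : g ^ n = 1) :
    Multiplicative (ZMod n) →* G where
  toFun x := g ^ (x.toAdd).val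
  map_one' := by simp
  map_mul' x y := by
    rw [toAdd_mul, ZMod.val_add, ← pow_add, ← pow_eq_pow_mod _ h]

/-- two elements of order 2, 3 give a homomorphism from the free product -/
noncomputable def pairHom {G : Type*} [Group G] (a b : G) (ha : a * a = 1) (hb : b * b * b = 1) :
    Monoid.CoprodI (fun i : Bool => Multiplicative (ZMod (ordB i))) →* G :=
  Monoid.CoprodI.lift fun i => match i with
    | false => cycHom 2 a (by rw [pow_two, ha])
    | true => cycHom 3 b (by rw [pow_succ, pow_two, hb])

theorem pairHom_a {G : Type*} [Group G] (a b : G) (ha : a * a = 1) (hb : b * b * b = 1) :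
    pairHom a b ha hb (Monoid.CoprodI.of (i := false) (Multiplicative.ofAdd (1 : ZMod 2))) = a := by
  rw [pairHom, Monoid.CoprodI.lift_of]
  exact pow_one a

theorem pairHom_b {G : Type*} [Group G] (a b : G) (ha : a * a = 1) (hb : b * b * b = 1) :
    pairHom a b ha hb (Monoid.CoprodI.of (i := true) (Multiplicative.ofAdd (1 : ZMod 3))) = b := by
  rw [pairHom, Monoid.CoprodI.lift_of]
  exact pow_one b

/-- ping-pong sets -/
def ppX (i : Bool) : Set PSL2Z := {g | ∃ m : SL2Z, xi m = g ∧
  (bif i then m.1 0 0 * m.1 1 0 < 0 else 0 < m.1 0 0 * m.1 1 0)}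

theorem z2_cases (h : Multiplicative (ZMod 2)) (hh : h ≠ 1) :
    h = Multiplicative.ofAdd (1 : ZMod 2) := by
  revert h
  decide

theorem z3_cases (h : Multiplicative (ZMod 3)) (hh : h ≠ 1) :
    h = Multiplicative.ofAdd (1 : ZMod 3) ∨ h = Multiplicative.ofAdd (2 : ZMod 3) := by
  revert h
  decide

theorem pair_inj : Function.Injective (pairHom Sp (Sp * Tp) Sp_sq ST_cube) := by
  refine Monoid.CoprodI.lift_injective_of_ping_pong _ (Or.inr ⟨true, ?_⟩) ppX ?_ ?_ ?_
  · change 3 ≤ Cardinal.mk (ZMod 3)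
    rw [Cardinal.mk_fintype, ZMod.card]
    norm_num
  · intro i
    cases i
    · exact ⟨_, ⟨!![1, 0; 1, 1], by norm_num [Matrix.det_fin_two_of]⟩, rfl, by simp⟩
    · exact ⟨_, ⟨!![1, 0; -1, 1], by norm_num [Matrix.det_fin_two_of]⟩, rfl, by simp⟩
  · have : Disjoint (ppX false) (ppX true) := by
      rw [Set.disjoint_left]
      rintro g ⟨m, hm, h1⟩ ⟨m', hm', h2⟩
      simp only [cond_false, cond_true] at h1 h2
      rcases xi_eq m m' (hm.trans hm'.symm) with rfl | rfl
      · omega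
      · simp at h2
        omega
    intro i j hij
    cases i <;> cases j
    · exact absurd rfl hij
    · exact this
    · exact this.symm
    · exact absurd rfl hij
  · intro i j hij h hh
    cases i <;> cases j
    · exact absurd rfl hij
    · have : h = Multiplicative.ofAdd (1 : ZMod 2) := z2_cases h hh
      subst this
      rintro x ⟨g, ⟨m, rfl, hm⟩, rfl⟩
      change Sp ^ 1 * xi m ∈ _
      rw [pow_one, Sp_def, ← map_mul]
      refine ⟨_, rfl, ?_⟩
      simp only [cond_false, cond_true] at hm ⊢
      simp [mS_coe, mST_coe, Matrix.mul_apply, Fin.sum_univ_two]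
      linarith
    · have : h = Multiplicative.ofAdd (1 : ZMod 3) ∨ h = Multiplicative.ofAdd (2 : ZMod 3) := z3_cases h hh
      rintro x ⟨g, ⟨m, rfl, hm⟩, rfl⟩
      simp only [cond_false] at hm
      rcases this with rfl | rfl
      · change (Sp * Tp) ^ 1 * xi m ∈ _
        rw [pow_one, ST_eq, ← map_mul]
        refine ⟨_, rfl, ?_⟩
        simp only [cond_true]
        simp [mS_coe, mST_coe, Matrix.mul_apply, Fin.sum_univ_two]
        rcases pos_and_pos_or_neg_and_neg_of_mul_pos hm with ⟨h1, h2⟩ | ⟨h1, h2⟩ <;> nlinarith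
      · change (Sp * Tp) ^ 2 * xi m ∈ _
        rw [pow_two, ST_eq, ← map_mul, ← map_mul]
        refine ⟨_, rfl, ?_⟩
        simp only [cond_true]
        simp [mS_coe, mST_coe, Matrix.mul_apply, Fin.sum_univ_two]
        rcases pos_and_pos_or_neg_and_neg_of_mul_pos hm with ⟨h1, h2⟩ | ⟨h1, h2⟩ <;> nlinarith
    · exact absurd rfl hij

theorem pair_surj : Function.Surjective (pairHom Sp (Sp * Tp) Sp_sq ST_cube) := by
  rw [← MonoidHom.range_eq_top, eq_top_iff, ← gen, Subgroup.closure_le]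
  rintro x (rfl | rfl)
  · exact ⟨_, pairHom_a Sp (Sp * Tp) Sp_sq ST_cube⟩
  · exact ⟨_, pairHom_b Sp (Sp * Tp) Sp_sq ST_cube⟩

theorem univ_prop {G : Type*} [Group G] (a b : G) (ha : a * a = 1) (hb : b * b * b = 1) :
    ∃ φ : PSL2Z →* G, φ Sp = a ∧ φ (Sp * Tp) = b := by
  let e := MulEquiv.ofBijective (pairHom Sp (Sp * Tp) Sp_sq ST_cube) ⟨pair_inj, pair_surj⟩
  refine ⟨(pairHom a b ha hb).comp e.symm.toMonoidHom, ?_, ?_⟩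
  · have : e.symm Sp = Monoid.CoprodI.of (i := false) (Multiplicative.ofAdd (1 : ZMod 2)) := by
      rw [MulEquiv.symm_apply_eq]
      exact (pairHom_a Sp (Sp * Tp) Sp_sq ST_cube).symm
    change pairHom a b ha hb (e.symm Sp) = a
    rw [this]
    exact pairHom_a a b ha hb
  · have : e.symm (Sp * Tp) =
        Monoid.CoprodI.of (i := true) (Multiplicative.ofAdd (1 : ZMod 3)) := by
      rw [MulEquiv.symm_apply_eq]
      exact (pairHom_b Sp (Sp * Tp) Sp_sq ST_cube).symm
    change pairHom a b ha hb (e.symm (Sp * Tp)) = b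
    rw [this]
    exact pairHom_b a b ha hb

end K3MM

namespace K3MM

/-! ### assembly -/

/-- action of `S` on cosets -/
noncomputable def sg (Γ : Subgroup PSL2Z) : Equiv.Perm (PSL2Z ⧸ Γ) := MulAction.toPerm Sp

/-- action of `S T` on cosets -/
noncomputable def rg (Γ : Subgroup PSL2Z) : Equiv.Perm (PSL2Z ⧸ Γ) := MulAction.toPerm (Sp * Tp)

theorem sg_apply (Γ : Subgroup PSL2Z) (x : PSL2Z ⧸ Γ) : sg Γ x = Sp • x := rfl

theorem rg_apply (Γ : Subgroup PSL2Z) (x : PSL2Z ⧸ Γ) : rg Γ x = (Sp * Tp) • x := rfl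

theorem sg_mul_rg (Γ : Subgroup PSL2Z) : sg Γ * rg Γ = MulAction.toPerm Tp := by
  ext x
  change Sp • (Sp * Tp) • x = Tp • x
  rw [smul_smul, ← T_eq]

theorem nOrb_eq (g : PSL2Z) (Γ : Subgroup PSL2Z) :
    nOrb g Γ = nq (sc (MulAction.toPerm g : Equiv.Perm (PSL2Z ⧸ Γ))) := by
  unfold nOrb nq
  refine Nat.card_congr (Quotient.congr (Equiv.refl _) ?_)
  intro x y
  change (MulAction.orbitRel (Subgroup.zpowers g) (PSL2Z ⧸ Γ)) x y ↔
    sc (MulAction.toPerm g : Equiv.Perm (PSL2Z ⧸ Γ)) x y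
  have hz : ∀ k : ℤ, ∀ z : PSL2Z ⧸ Γ,
      ((MulAction.toPerm g : Equiv.Perm (PSL2Z ⧸ Γ)) ^ k) z = g ^ k • z := by
    intro k z
    have := map_zpow (MulAction.toPermHom PSL2Z (PSL2Z ⧸ Γ)) g k
    have h2 := congrArg (fun p : Equiv.Perm (PSL2Z ⧸ Γ) => p z) this
    exact h2.symm
  rw [MulAction.orbitRel_apply, sc_iff]
  constructor
  · rintro ⟨⟨_, k, rfl⟩, h⟩
    refine Equiv.Perm.SameCycle.symm ⟨k, ?_⟩
    rw [hz]
    exact h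
  · intro h
    obtain ⟨k, hk⟩ := h.symm
    rw [hz] at hk
    exact ⟨⟨g ^ k, k, rfl⟩, hk⟩

theorem good_iff (Γ : Subgroup PSL2Z) [Fintype (PSL2Z ⧸ Γ)] [DecidableEq (PSL2Z ⧸ Γ)] :
    Good (sg Γ) (rg Γ) ↔ GenusZero Γ ∧ tfIdx Γ ≤ 24 := by
  have hi : Γ.index = Fintype.card (PSL2Z ⧸ Γ) := by
    rw [Subgroup.index_eq_card, Nat.card_eq_fintype_card]
  have hf2 : nFix Sp Γ = (Finset.univ.filter fun x => sg Γ x = x).card := by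
    unfold nFix
    rw [Nat.card_eq_fintype_card, Fintype.card_subtype]
    rfl
  have hf3 : nFix (Sp * Tp) Γ = (Finset.univ.filter fun x => rg Γ x = x).card := by
    unfold nFix
    rw [Nat.card_eq_fintype_card, Fintype.card_subtype]
    rfl
  have hg : GenusZero Γ ↔
      nq (sc (sg Γ)) + nq (sc (rg Γ)) + nq (sc (sg Γ * rg Γ)) = Fintype.card (PSL2Z ⧸ Γ) + 2 := by
    unfold GenusZero
    rw [nOrb_eq, nOrb_eq, nOrb_eq, hi, sg_mul_rg]
    rfl
  constructor
  · intro h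
    refine ⟨hg.2 h.genus, ?_⟩
    have := h.bound
    unfold tfIdx
    omega
  · rintro ⟨h1, h2⟩
    refine ⟨?_, ?_, ?_, hg.1 h1, ?_⟩
    · intro x
      rw [sg_apply, sg_apply, smul_smul, Sp_sq, one_smul]
    · intro x
      rw [rg_apply, rg_apply, rg_apply, smul_smul, smul_smul, ST_cube, one_smul]
    · have key : ∀ g : PSL2Z, ∀ x : PSL2Z ⧸ Γ, comp (rg Γ) (sg Γ) x (g • x) := by
        intro g
        have hgm : g ∈ Subgroup.closure {Sp, Sp * Tp} := by rw [gen]; trivial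
        induction hgm using Subgroup.closure_induction with
        | mem y hy =>
          intro x
          rcases hy with rfl | rfl
          · exact (le_sup_right : sc (sg Γ) ≤ comp (rg Γ) (sg Γ)) (sc_step (sg Γ) x)
          · exact (le_sup_left : sc (rg Γ) ≤ comp (rg Γ) (sg Γ)) (sc_step (rg Γ) x)
        | one => intro x; rw [one_smul]
        | mul a b _ _ iha ihb =>
          intro x
          rw [mul_smul]
          exact Setoid.trans' _ (ihb x) (iha _)
        | inv a _ iha =>
          intro x
          have := iha (a⁻¹ • x)
          rw [smul_inv_smul] at this
          exact Setoid.symm' _ this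
      intro x y
      obtain ⟨g, rfl⟩ := MulAction.exists_smul_eq PSL2Z x y
      exact key g x
    · unfold tfIdx at h2
      omega

theorem nq_congr {D D' : Type} (e : D ≃ D') {π : Equiv.Perm D} {π' : Equiv.Perm D'}
    (h : ∀ x, e (π x) = π' (e x)) : nq (sc π) = nq (sc π') := by
  unfold nq
  refine Nat.card_congr (Quotient.congr e ?_)
  intro x y
  change sc π x y ↔ sc π' (e x) (e y)
  have hπ : π' = e.permCongr π := by
    ext z
    obtain ⟨x, rfl⟩ := e.surjective z
    simp [h]
  have hz : ∀ k : ℤ, ∀ z, (π' ^ k) (e z) = e ((π ^ k) z) := by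
    intro k z
    have := map_zpow e.permCongrHom π k
    have h2 := congrArg (fun p : Equiv.Perm D' => p (e z)) this
    rw [hπ]
    refine Eq.trans h2.symm ?_
    simp
  rw [sc_iff, sc_iff]
  constructor
  · rintro ⟨k, hk⟩
    exact ⟨k, by rw [hz, hk]⟩
  · rintro ⟨k, hk⟩
    rw [hz] at hk
    exact ⟨k, e.injective hk⟩

theorem fix_congr {D D' : Type} [Fintype D] [DecidableEq D] [Fintype D'] [DecidableEq D']
    (e : D ≃ D') {π : Equiv.Perm D} {π' : Equiv.Perm D'}
    (h : ∀ x, e (π x) = π' (e x)) :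
    (Finset.univ.filter fun x => π x = x).card = (Finset.univ.filter fun x => π' x = x).card := by
  refine Finset.card_bij (fun x _ => e x) ?_ ?_ ?_
  · intro x hx
    simp only [Finset.mem_filter, Finset.mem_univ, true_and] at hx ⊢
    rw [← h, hx]
  · intro x _ y _ hxy
    exact e.injective hxy
  · intro y hy
    obtain ⟨x, rfl⟩ := e.surjective y
    simp only [Finset.mem_filter, Finset.mem_univ, true_and] at hy
    refine ⟨x, ?_, rfl⟩
    simp only [Finset.mem_filter, Finset.mem_univ, true_and]
    apply e.injective
    rw [h, hy]

/-- minimal key of a subgroup -/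
def IsMinKey (Γ : Subgroup PSL2Z) (w : List ℕ) : Prop :=
  ∃ _ : Fintype (PSL2Z ⧸ Γ), ∃ _ : DecidableEq (PSL2Z ⧸ Γ),
    ∃ d : PSL2Z ⧸ Γ, key eqD (sg Γ) (rg Γ) d = w ∧
      ∀ y, key eqD (sg Γ) (rg Γ) d ≤ key eqD (sg Γ) (rg Γ) y

theorem IsMinKey.uniq {Γ : Subgroup PSL2Z} {w w' : List ℕ} (h : IsMinKey Γ w)
    (h' : IsMinKey Γ w') : w = w' := by
  obtain ⟨i1, j1, d, rfl, hd⟩ := h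
  obtain ⟨i2, j2, d', rfl, hd'⟩ := h'
  obtain rfl : j1 = j2 := Subsingleton.elim _ _
  exact le_antisymm (hd _) (hd' _)

theorem exists_minKey (Γ : Subgroup PSL2Z) (h : Γ.index ≠ 0) : ∃ w, IsMinKey Γ w := by
  classical
  haveI : Γ.FiniteIndex := ⟨h⟩
  have hf : Finite (PSL2Z ⧸ Γ) := Subgroup.finite_quotient_of_finiteIndex
  letI := Fintype.ofFinite (PSL2Z ⧸ Γ)
  obtain ⟨d, hd⟩ := Finite.exists_min (fun d : PSL2Z ⧸ Γ => key eqD (sg Γ) (rg Γ) d)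
  exact ⟨_, inferInstance, inferInstance, d, rfl, hd⟩

theorem minKey_conj {A B : Subgroup PSL2Z} (h : SubgroupConj A B) {w : List ℕ}
    (hB : IsMinKey B w) (hA : A.index ≠ 0) : IsMinKey A w := by
  obtain ⟨u, hu⟩ := exists_minKey A hA
  obtain ⟨g, rfl⟩ := h
  set B := Subgroup.map (MulAut.conj g).toMonoidHom A with hBdef
  have hmem : ∀ x, x ∈ A ↔ g * x * g⁻¹ ∈ B := by
    intro x
    constructor
    · intro hx
      exact ⟨x, hx, rfl⟩
    · rintro ⟨y, hy, hxy⟩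
      have : g * y * g⁻¹ = g * x * g⁻¹ := hxy
      have : y = x := by simpa using this
      exact this ▸ hy
  have hiff : ∀ a b : PSL2Z, (a : PSL2Z ⧸ A) = b ↔
      ((a * g⁻¹ : PSL2Z) : PSL2Z ⧸ B) = ((b * g⁻¹ : PSL2Z) : PSL2Z ⧸ B) := by
    intro a b
    rw [QuotientGroup.eq, QuotientGroup.eq, hmem]
    have : g * (a⁻¹ * b) * g⁻¹ = (a * g⁻¹)⁻¹ * (b * g⁻¹) := by group
    rw [this]
  let e : PSL2Z ⧸ A → PSL2Z ⧸ B := fun x =>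
    Quotient.liftOn' x (fun a => ((a * g⁻¹ : PSL2Z) : PSL2Z ⧸ B)) (by
      intro a b hab
      exact (hiff a b).1 (Quotient.sound' hab))
  have he : ∀ a : PSL2Z, e (a : PSL2Z ⧸ A) = ((a * g⁻¹ : PSL2Z) : PSL2Z ⧸ B) := fun a => rfl
  have hinj : Function.Injective e := by
    intro x y
    induction x using QuotientGroup.induction_on with | _ a =>
    induction y using QuotientGroup.induction_on with | _ b =>
    intro hxy
    exact (hiff a b).2 hxy
  have hsurj : Function.Surjective e := by
    intro y
    induction y using QuotientGroup.induction_on with | _ b =>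
    refine ⟨((b * g : PSL2Z) : PSL2Z ⧸ A), ?_⟩
    rw [he, mul_inv_cancel_right]
  have heq : ∀ k : PSL2Z, ∀ x, e (k • x) = k • e x := by
    intro k x
    induction x using QuotientGroup.induction_on with | _ a =>
    change (((k * a) * g⁻¹ : PSL2Z) : PSL2Z ⧸ B) = ((k * (a * g⁻¹) : PSL2Z) : PSL2Z ⧸ B)
    rw [mul_assoc]
  obtain ⟨i1, j1, d, rfl, hd⟩ := hu
  suffices hw : IsMinKey B (key eqD (sg A) (rg A) d) by
    rw [hB.uniq hw]
    exact ⟨i1, j1, d, rfl, hd⟩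
  obtain ⟨i2, j2, d', rfl, hd'⟩ := hB
  have hk : ∀ x, key eqD (sg B) (rg B) (e x) = key eqD (sg A) (rg A) x :=
    key_nat eqD_iff (sg A) (rg A) eqD_iff e hinj (heq Sp) (heq (Sp * Tp))
  refine ⟨i2, j2, e d, hk d, ?_⟩
  intro y
  obtain ⟨x, rfl⟩ := hsurj y
  rw [hk, hk]
  exact hd x

theorem conj_of_minKey {A B : Subgroup PSL2Z} {w : List ℕ} (hA : IsMinKey A w)
    (hB : IsMinKey B w) (gA : GenusZero A ∧ tfIdx A ≤ 24) (gB : GenusZero B ∧ tfIdx B ≤ 24) :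
    SubgroupConj A B := by
  obtain ⟨i1, j1, d, hw, hd⟩ := hA
  obtain ⟨i2, j2, d', rfl, hd'⟩ := hB
  obtain ⟨e, hed, hes, her⟩ :=
    iso_of_key ((good_iff A).2 gA) hd ((good_iff B).2 gB) hd' hw
  have heq : ∀ k : PSL2Z, ∀ x, e (k • x) = k • e x := by
    intro g
    have hgm : g ∈ Subgroup.closure {Sp, Sp * Tp} := by rw [gen]; trivial
    induction hgm using Subgroup.closure_induction with
    | mem y hy =>
      rcases hy with rfl | rfl
      · exact hes
      · exact her
    | one => intro x; rw [one_smul, one_smul]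
    | mul a b _ _ iha ihb => intro x; rw [mul_smul, iha, ihb, mul_smul]
    | inv a _ iha =>
      intro x
      have := iha (a⁻¹ • x)
      rw [smul_inv_smul] at this
      rw [this, inv_smul_smul]
  obtain ⟨c, hc⟩ := QuotientGroup.mk_surjective (e ((1 : PSL2Z) : PSL2Z ⧸ A))
  have hA : ∀ x, x ∈ A ↔ c⁻¹ * x * c ∈ B := by
    intro x
    have h1 : x ∈ A ↔ x • ((1 : PSL2Z) : PSL2Z ⧸ A) = ((1 : PSL2Z) : PSL2Z ⧸ A) := by
      change _ ↔ ((x * 1 : PSL2Z) : PSL2Z ⧸ A) = ((1 : PSL2Z) : PSL2Z ⧸ A)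
      rw [eq_comm, QuotientGroup.eq]
      simp
    rw [h1, ← e.injective.eq_iff, heq, ← hc]
    change ((x * c : PSL2Z) : PSL2Z ⧸ B) = (c : PSL2Z ⧸ B) ↔ _
    rw [eq_comm, QuotientGroup.eq, mul_assoc]
  refine ⟨c⁻¹, ?_⟩
  ext y
  constructor
  · rintro ⟨x, hx, rfl⟩
    have := (hA x).1 hx
    simpa using this
  · intro hy
    refine ⟨c * y * c⁻¹, (hA _).2 ?_, ?_⟩
    · have : c⁻¹ * (c * y * c⁻¹) * c = y := by group
      rw [this]
      exact hy
    · change c⁻¹ * (c * y * c⁻¹) * c⁻¹⁻¹ = y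
      group

theorem exists_group {w : List ℕ} (h : w ∈ words) :
    ∃ Γ : Subgroup PSL2Z, Γ.index ≠ 0 ∧ (GenusZero Γ ∧ tfIdx Γ ≤ 24) ∧ IsMinKey Γ w := by
  classical
  obtain ⟨n, σ, ρ, d, hG, rfl, hmin⟩ := exists_of_word h
  obtain ⟨φ, hφs, hφr⟩ := univ_prop σ ρ (by ext x; simp [hG.hs]) (by ext x; simp [hG.hr])
  letI act : MulAction PSL2Z (Fin n) := MulAction.compHom (Fin n) φ
  have hact : ∀ (g : PSL2Z) (x : Fin n), g • x = φ g x := fun g x => rfl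
  let Γ := MulAction.stabilizer PSL2Z d
  let f : PSL2Z ⧸ Γ → Fin n := MulAction.ofQuotientStabilizer PSL2Z d
  have hf : ∀ (g : PSL2Z) (x : PSL2Z ⧸ Γ), f (g • x) = φ g (f x) :=
    fun g x => MulAction.ofQuotientStabilizer_smul PSL2Z d g x
  have hinj : Function.Injective f := MulAction.injective_ofQuotientStabilizer PSL2Z d
  have hsurj : Function.Surjective f := by
    let t : Setoid (Fin n) := MulAction.orbitRel PSL2Z (Fin n)
    have hle : comp ρ σ ≤ t := by
      refine sup_le (sc_le ?_) (sc_le ?_)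
      · intro x
        refine t.symm' ⟨Sp * Tp, ?_⟩
        change φ (Sp * Tp) x = ρ x
        rw [hφr]
      · intro x
        refine t.symm' ⟨Sp, ?_⟩
        change φ Sp x = σ x
        rw [hφs]
    intro y
    obtain ⟨g, hg⟩ := hle (hG.conn y d)
    exact ⟨(g : PSL2Z ⧸ Γ), hg⟩
  let e : PSL2Z ⧸ Γ ≃ Fin n := Equiv.ofBijective f ⟨hinj, hsurj⟩
  letI : Fintype (PSL2Z ⧸ Γ) := Fintype.ofEquiv _ e.symm
  have hes : ∀ x, e (sg Γ x) = σ (e x) := by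
    intro x
    rw [← hφs]
    exact hf Sp x
  have her : ∀ x, e (rg Γ x) = ρ (e x) := by
    intro x
    rw [← hφr]
    exact hf (Sp * Tp) x
  have hcard : Fintype.card (PSL2Z ⧸ Γ) = Fintype.card (Fin n) := Fintype.card_congr e
  have hGG : Good (sg Γ) (rg Γ) := by
    refine ⟨?_, ?_, ?_, ?_, ?_⟩
    · intro x
      apply e.injective
      rw [hes, hes, hG.hs]
    · intro x
      apply e.injective
      rw [her, her, her, hG.hr]
    · have hle : comp ρ σ ≤ (comp (rg Γ) (sg Γ)).comap e.symm := by
        refine sup_le (sc_le ?_) (sc_le ?_)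
        · intro x
          change comp (rg Γ) (sg Γ) (e.symm x) (e.symm (ρ x))
          have : e.symm (ρ x) = rg Γ (e.symm x) := by
            rw [Equiv.symm_apply_eq, her, Equiv.apply_symm_apply]
          rw [this]
          exact (le_sup_left : sc (rg Γ) ≤ comp (rg Γ) (sg Γ)) (sc_step (rg Γ) _)
        · intro x
          change comp (rg Γ) (sg Γ) (e.symm x) (e.symm (σ x))
          have : e.symm (σ x) = sg Γ (e.symm x) := by
            rw [Equiv.symm_apply_eq, hes, Equiv.apply_symm_apply]
          rw [this]
          exact (le_sup_right : sc (sg Γ) ≤ comp (rg Γ) (sg Γ)) (sc_step (sg Γ) _)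
      intro x y
      have := hle (hG.conn (e x) (e y))
      change comp (rg Γ) (sg Γ) (e.symm (e x)) (e.symm (e y)) at this
      rwa [Equiv.symm_apply_apply, Equiv.symm_apply_apply] at this
    · have hesr : ∀ x, e ((sg Γ * rg Γ) x) = (σ * ρ) (e x) := by
        intro x
        rw [Equiv.Perm.mul_apply, Equiv.Perm.mul_apply, hes, her]
      rw [nq_congr e hes, nq_congr e her, nq_congr e hesr, hcard]
      exact hG.genus
    · rw [fix_congr e hes, fix_congr e her, hcard]
      exact hG.bound
  refine ⟨Γ, ?_, (good_iff Γ).1 hGG, ?_⟩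
  · rw [Subgroup.index_eq_card]
    haveI : Nonempty (PSL2Z ⧸ Γ) := ⟨((1 : PSL2Z) : PSL2Z ⧸ Γ)⟩
    exact Nat.card_pos.ne'
  · have hk : ∀ x, key eqD σ ρ (e x) = key eqD (sg Γ) (rg Γ) x :=
      key_nat eqD_iff (sg Γ) (rg Γ) eqD_iff e e.injective hes her
    refine ⟨inferInstance, inferInstance, e.symm d, ?_, ?_⟩
    · rw [← hk, Equiv.apply_symm_apply]
    · intro y
      rw [← hk, ← hk, Equiv.apply_symm_apply]
      exact hmin _

theorem minKey_mem {Γ : Subgroup PSL2Z} {w : List ℕ} (h : IsMinKey Γ w)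
    (g : GenusZero Γ ∧ tfIdx Γ ≤ 24) : w ∈ words := by
  obtain ⟨i1, j1, d, rfl, hd⟩ := h
  exact key_mem_words ((good_iff Γ).2 g) hd

theorem count_eq :
    countClasses (fun Γ => Γ.index ≠ 0 ∧ GenusZero Γ ∧ tfIdx Γ ≤ 24) = 3228 := by
  unfold countClasses
  choose F hF using fun A : {Γ : Subgroup PSL2Z // Γ.index ≠ 0 ∧ GenusZero Γ ∧ tfIdx Γ ≤ 24} =>
    exists_minKey A.1 A.2.1
  let f : (Quot fun A B : {Γ : Subgroup PSL2Z // Γ.index ≠ 0 ∧ GenusZero Γ ∧ tfIdx Γ ≤ 24} =>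
      SubgroupConj A.1 B.1) → {w // w ∈ words} :=
    Quot.lift (fun A => ⟨F A, minKey_mem (hF A) A.2.2⟩) (by
      intro A B h
      exact Subtype.ext ((hF A).uniq (minKey_conj h (hF B) A.2.1)))
  have hbij : Function.Bijective f := by
    constructor
    · intro a b
      induction a using Quot.ind with | _ A =>
      induction b using Quot.ind with | _ B =>
      intro hab
      have h1 : F A = F B := congrArg Subtype.val hab
      apply Quot.sound
      exact conj_of_minKey (hF A) (h1 ▸ hF B) A.2.2 B.2.2
    · rintro ⟨w, hw⟩
      obtain ⟨Γ, h1, h2, h3⟩ := exists_group hw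
      refine ⟨Quot.mk _ ⟨Γ, h1, h2⟩, Subtype.ext ?_⟩
      exact (hF ⟨Γ, h1, h2⟩).uniq h3
  rw [Nat.card_eq_of_bijective f hbij, Nat.card_eq_fintype_card, Fintype.card_coe, words_card]

theorem tf_mem (Γ : Subgroup PSL2Z) (h0 : Γ.index ≠ 0) (h1 : GenusZero Γ) (h2 : tfIdx Γ ≤ 24) :
    tfIdx Γ ∈ ({6, 12, 18, 24} : Set ℕ) := by
  classical
  haveI : Γ.FiniteIndex := ⟨h0⟩
  have hf : Finite (PSL2Z ⧸ Γ) := Subgroup.finite_quotient_of_finiteIndex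
  letI := Fintype.ofFinite (PSL2Z ⧸ Γ)
  have hG := (good_iff Γ).2 ⟨h1, h2⟩
  have a1 := nq_two hG.hs
  have a2 := nq_three hG.hr
  have a3 := hG.genus
  have hi : Γ.index = Fintype.card (PSL2Z ⧸ Γ) := by
    rw [Subgroup.index_eq_card, Nat.card_eq_fintype_card]
  have hf2 : nFix Sp Γ = (Finset.univ.filter fun x => sg Γ x = x).card := by
    unfold nFix
    rw [Nat.card_eq_fintype_card, Fintype.card_subtype]
    rfl
  have hf3 : nFix (Sp * Tp) Γ = (Finset.univ.filter fun x => rg Γ x = x).card := by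
    unfold nFix
    rw [Nat.card_eq_fintype_card, Fintype.card_subtype]
    rfl
  have ht : tfIdx Γ = Γ.index + 3 * nFix Sp Γ + 2 * nFix (Sp * Tp) Γ := rfl
  simp only [Set.mem_insert_iff, Set.mem_singleton_iff]
  omega

end K3MM

/-- There are exactly 3228 conjugacy classes of genus-zero finite-index subgroups `Γ` of
`PSL(2,ℤ)` with `n + 3e₂ + 2e₃ ≤ 24` (these are exactly the modular monodromy groups of
elliptically fibered K3 surfaces); moreover for any such subgroup the quantity
`n + 3e₂ + 2e₃` lies in `{6, 12, 18, 24}`. -/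
theorem count_K3_modular_monodromy :
    countClasses (fun Γ => Γ.index ≠ 0 ∧ GenusZero Γ ∧ tfIdx Γ ≤ 24) = 3228 ∧
    ∀ Γ : Subgroup PSL2Z, Γ.index ≠ 0 → GenusZero Γ → tfIdx Γ ≤ 24 →
      tfIdx Γ ∈ ({6, 12, 18, 24} : Set ℕ) := by
  exact ⟨K3MM.count_eq, K3MM.tf_mem⟩
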